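/- There is a universal constant C such that the following holds. Let (g_υ)_{υ∈ℝ^I} be a nice distribution of polynomials on ℝ^n that is (k,S,1)-attenuated on average for some k ∈ ℕ with k ≥ 1. Fix 0 < β' < 1 and 0 ≤ λ ≤ 1, and suppose S ≥ C·k·log(3/β')/β'. Then for x ∼ N(0,1)^n, except with probability at most β', we have E_υ[‖(g_υ)_{λ|x}‖₂²] ≥ (β'/(C·k))^{2k}·E_υ[‖g_υ‖₂²]. -/

import Mathlib

open MeasureTheory ProbabilityTheory MvPolynomial

/-- The standard Gaussian measure `N(0,1)^n` on `ℝ^n`. -/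
noncomputable def gaussianN (n : ℕ) : Measure (Fin n → ℝ) :=
  Measure.pi fun _ => gaussianReal 0 1

/-- The normalized probabilists' Hermite polynomial `h_k = H_k / √(k!)`. -/
noncomputable def hermiteFn (k : ℕ) (t : ℝ) : ℝ :=
  ((Polynomial.hermite k).map (Int.castRingHom ℝ)).eval t / Real.sqrt (Nat.factorial k)

/-- The multivariate Hermite polynomial `h_α(x) = ∏ i, h_{α i}(x i)`. -/
noncomputable def hermiteMv {n : ℕ} (α : Fin n → ℕ) (x : Fin n → ℝ) : ℝ :=
  ∏ i, hermiteFn (α i) (x i)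

/-- Hermite coefficient `f̂(α) = E_{x ∼ N(0,1)^n}[f(x)·h_α(x)]` of a function. -/
noncomputable def hermiteCoeffF {n : ℕ} (f : (Fin n → ℝ) → ℝ) (α : Fin n → ℕ) : ℝ :=
  ∫ x, f x * hermiteMv α x ∂(gaussianN n)

/-- Hermite coefficient `ĝ(α)` of a polynomial. -/
noncomputable def hermiteCoeff {n : ℕ} (g : MvPolynomial (Fin n) ℝ) (α : Fin n → ℕ) : ℝ :=
  hermiteCoeffF (fun x => eval x g) α

/-- The squared Gaussian 2-norm `‖g‖₂² = E_{x ∼ N(0,1)^n}[g(x)²]`. -/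
noncomputable def norm2sq {n : ℕ} (g : MvPolynomial (Fin n) ℝ) : ℝ :=
  ∫ x, (eval x g) ^ 2 ∂(gaussianN n)

/-- The `λ`-zoom of `g` at `x`: `g_{λ|x}(y) = g(√(1-λ)·x + √λ·y)`, as a polynomial in `y`. -/
noncomputable def zoom {n : ℕ} (g : MvPolynomial (Fin n) ℝ) (lam : ℝ) (x : Fin n → ℝ) :
    MvPolynomial (Fin n) ℝ :=
  aeval (fun i => C (Real.sqrt (1 - lam) * x i) + C (Real.sqrt lam) * X i) g

/-- `HyperVar_R[g^{≥m}] = Σ_{|α| ≥ m} R^{2|α|}·ĝ(α)²`. -/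
noncomputable def hyperVarGE {n : ℕ} (R : ℝ) (m : ℕ) (g : MvPolynomial (Fin n) ℝ) : ℝ :=
  ∑' α : Fin n → ℕ, if m ≤ ∑ i, α i then R ^ (2 * ∑ i, α i) * hermiteCoeff g α ^ 2 else 0

/-- `HyperVar_R[g] = Σ_{α ≠ 0} R^{2|α|}·ĝ(α)²`. -/
noncomputable def hyperVar {n : ℕ} (R : ℝ) (g : MvPolynomial (Fin n) ℝ) : ℝ :=
  hyperVarGE R 1 g

/-- A nice distribution of polynomials of degree at most `d` on `ℝ^n`, indexed by
`υ ∈ ℝ^I`: each `g υ` has degree at most `d` and each coefficient of `g υ` is a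
polynomial of degree at most `d` in `υ`. -/
def NiceFamily (n I d : ℕ) (g : (Fin I → ℝ) → MvPolynomial (Fin n) ℝ) : Prop :=
  (∀ υ, (g υ).totalDegree ≤ d) ∧
  ∀ m : Fin n →₀ ℕ, ∃ P : MvPolynomial (Fin I) ℝ,
    P.totalDegree ≤ d ∧ ∀ υ, coeff m (g υ) = eval υ P

section

open scoped ENNReal

theorem volume_add_le_of_isCompact {A B C : Set ℝ} (hA : IsCompact A) (hB : IsCompact B)
    (hA0 : A.Nonempty) (hB0 : B.Nonempty) (h : ∀ a ∈ A, ∀ b ∈ B, a + b ∈ C) :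
    volume A + volume B ≤ volume C := by
  obtain ⟨p, hpA, hp⟩ := hA.exists_isMaxOn hA0 continuousOn_id
  obtain ⟨q, hqB, hq⟩ := hB.exists_isMinOn hB0 continuousOn_id
  have h1 : volume A ≤ volume (C ∩ Set.Iic (p + q)) := by
    rw [← measure_preimage_add_right volume (-q) A]
    refine measure_mono fun x hx => ⟨?_, ?_⟩
    · simpa using h _ hx _ hqB
    · have : x + -q ≤ p := hp hx
      simp only [Set.mem_Iic]; linarith
  have h2 : volume B ≤ volume (C \ Set.Iic (p + q)) := by
    rw [← measure_preimage_add_right volume (-p) B,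
      ← measure_sdiff_null (s := (fun x => x + -p) ⁻¹' B) (Real.volume_singleton (a := p + q))]
    refine measure_mono fun x hx => ⟨?_, ?_⟩
    · have := h _ hpA _ hx.1
      simpa using this
    · have h3 : q ≤ x + -p := hq hx.1
      have h4 : x ≠ p + q := hx.2
      simp only [Set.mem_Iic, not_le]
      exact lt_of_le_of_ne (by linarith) h4.symm
  calc volume A + volume B ≤ _ := add_le_add h1 h2
    _ = volume C := measure_inter_add_sdiff C measurableSet_Iic

/-- The Brunn-Minkowski inequality on the real line. -/
theorem volume_add_le_of_add_mem {A B C : Set ℝ} (hA : MeasurableSet A) (hB : MeasurableSet B)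
    (hA0 : A.Nonempty) (hB0 : B.Nonempty) (h : ∀ a ∈ A, ∀ b ∈ B, a + b ∈ C) :
    volume A + volume B ≤ volume C := by
  have key : ∀ K ⊆ A, IsCompact K → ∀ L ⊆ B, IsCompact L → volume K + volume L ≤ volume C := by
    intro K hKA hK L hLB hL
    obtain ⟨a, ha⟩ := hA0
    obtain ⟨b, hb⟩ := hB0
    calc volume K + volume L ≤ volume (insert a K) + volume (insert b L) :=
          add_le_add (measure_mono (Set.subset_insert _ _)) (measure_mono (Set.subset_insert _ _))
      _ ≤ volume C := by
          refine volume_add_le_of_isCompact (hK.insert a) (hL.insert b) ⟨a, by simp⟩ ⟨b, by simp⟩ ?_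
          rintro x (rfl | hx) y (rfl | hy)
          · exact h _ ha _ hb
          · exact h _ ha _ (hLB hy)
          · exact h _ (hKA hx) _ hb
          · exact h _ (hKA hx) _ (hLB hy)
  have sup : ∀ (S : Set ℝ), MeasurableSet S → ∀ c d : ℝ≥0∞,
      (∀ K ⊆ S, IsCompact K → volume K + c ≤ d) → volume S + c ≤ d := by
    intro S hS c d hK
    rw [hS.measure_eq_iSup_isCompact, ENNReal.iSup_add]
    refine iSup_le fun K => ?_
    by_cases h1 : K ⊆ S
    · by_cases h2 : IsCompact K
      · simpa [h1, h2] using hK K h1 h2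
      · simpa [h1, h2] using (le_add_left le_rfl).trans (hK ∅ (by simp) isCompact_empty)
    · simpa [h1] using (le_add_left le_rfl).trans (hK ∅ (by simp) isCompact_empty)
  refine sup A hA _ _ fun K hKA hK => ?_
  rw [add_comm]
  refine sup B hB _ _ fun L hLB hL => ?_
  rw [add_comm]
  exact key K hKA hK L hLB hL

theorem volume_smul_add_le {A B C : Set ℝ} {s : ℝ} (hs0 : 0 < s) (hs1 : s < 1)
    (hA : MeasurableSet A) (hB : MeasurableSet B)
    (hA0 : A.Nonempty) (hB0 : B.Nonempty) (h : ∀ a ∈ A, ∀ b ∈ B, (1 - s) * a + s * b ∈ C) :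
    ENNReal.ofReal (1 - s) * volume A + ENNReal.ofReal s * volume B ≤ volume C := by
  have hr : ∀ r : ℝ, 0 < r → ∀ S : Set ℝ, volume ((fun x => r⁻¹ * x) ⁻¹' S) =
      ENNReal.ofReal r * volume S := by
    intro r hr S
    rw [Real.volume_preimage_mul_left (by positivity)]
    simp [abs_of_pos hr]
  rw [← hr _ (by linarith), ← hr _ hs0]
  refine volume_add_le_of_add_mem (measurable_const_mul _ hA) (measurable_const_mul _ hB) ?_ ?_ ?_
  · obtain ⟨a, ha⟩ := hA0
    refine ⟨(1 - s) * a, ?_⟩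
    have : (1 - s) ≠ 0 := by linarith
    simpa [this] using ha
  · obtain ⟨b, hb⟩ := hB0
    exact ⟨s * b, by simpa [hs0.ne'] using hb⟩
  · intro a ha b hb
    have := h _ ha _ hb
    have h1 : (1 - s) ≠ 0 := by linarith
    simpa [hs0.ne', h1] using this

theorem lintegral_eq_lintegral_meas_lt_of_le_one {f : ℝ → ℝ≥0∞} (hf : Measurable f)
    (h1 : ∀ x, f x ≤ 1) :
    ∫⁻ x, f x = ∫⁻ t in Set.Ioo (0 : ℝ) 1, volume {x | ENNReal.ofReal t < f x} := by
  have e : ∀ x, f x ≠ ∞ := fun x => ((h1 x).trans_lt ENNReal.one_lt_top).ne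
  have : ∫⁻ x, f x = ∫⁻ x, ENNReal.ofReal (f x).toReal :=
    lintegral_congr fun x => (ENNReal.ofReal_toReal (e x)).symm
  rw [this, lintegral_eq_lintegral_meas_lt _ (ae_of_all _ fun x => ENNReal.toReal_nonneg)
    hf.ennreal_toReal.aemeasurable]
  have hu : Set.Ioi (0 : ℝ) = Set.Ioo 0 1 ∪ Set.Ici 1 := (Set.Ioo_union_Ici_eq_Ioi one_pos).symm
  rw [hu, lintegral_union measurableSet_Ici
    (Set.disjoint_left.2 fun x hx hx' => absurd hx.2 (not_lt.2 hx'))]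
  have z : ∫⁻ t in Set.Ici (1 : ℝ), volume {a | t < (f a).toReal} = 0 := by
    rw [setLIntegral_congr_fun (g := fun _ => 0) measurableSet_Ici]
    · simp
    · intro t ht
      have : {a | t < (f a).toReal} = ∅ := by
        ext a
        simp only [Set.mem_ofPred_eq, Set.mem_empty_iff_false, iff_false, not_lt]
        exact (ENNReal.toReal_le_of_le_ofReal zero_le_one (by simpa using h1 a)).trans ht
      simp [this]
  rw [z, add_zero]
  refine setLIntegral_congr_fun measurableSet_Ioo fun t ht => ?_
  congr 1
  ext a
  simp [ENNReal.ofReal_lt_iff_lt_toReal ht.1.le (e a)]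

theorem prekopaLeindler_of_iSup_eq_one {f g h : ℝ → ℝ≥0∞} {s : ℝ} (hs0 : 0 < s) (hs1 : s < 1)
    (hf : Measurable f) (hg : Measurable g) (hh : Measurable h)
    (hf1 : ⨆ x, f x = 1) (hg1 : ⨆ x, g x = 1)
    (H : ∀ x y, f x ^ (1 - s) * g y ^ s ≤ h ((1 - s) * x + s * y)) :
    ENNReal.ofReal (1 - s) * (∫⁻ x, f x) + ENNReal.ofReal s * (∫⁻ x, g x) ≤ ∫⁻ x, h x := by
  have hm : ∀ u : ℝ → ℝ≥0∞, Measurable fun t : ℝ => volume {x | ENNReal.ofReal t < u x} := by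
    intro u
    refine Antitone.measurable fun t t' htt => measure_mono fun x hx => ?_
    exact (ENNReal.ofReal_le_ofReal htt).trans_lt hx
  calc _ = ∫⁻ t in Set.Ioo (0 : ℝ) 1, (ENNReal.ofReal (1 - s) *
          volume {x | ENNReal.ofReal t < f x} + ENNReal.ofReal s *
          volume {x | ENNReal.ofReal t < g x}) := by
        rw [lintegral_add_left ((hm f).const_mul _), lintegral_const_mul _ (hm f),
          lintegral_const_mul _ (hm g),
          lintegral_eq_lintegral_meas_lt_of_le_one hf fun x => hf1 ▸ le_iSup f x,
          lintegral_eq_lintegral_meas_lt_of_le_one hg fun x => hg1 ▸ le_iSup g x]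
    _ ≤ ∫⁻ t in Set.Ioo (0 : ℝ) 1, volume {x | ENNReal.ofReal t < min (h x) 1} := by
        refine setLIntegral_mono (hm _) fun t ht => ?_
        have ht1 : ENNReal.ofReal t < 1 := by simpa using ht.2
        have ht0 : ENNReal.ofReal t ≠ 0 := by simpa using ht.1
        refine volume_smul_add_le hs0 hs1 (measurableSet_lt measurable_const hf)
          (measurableSet_lt measurable_const hg) ?_ ?_ ?_
        · rw [← hf1] at ht1
          exact lt_iSup_iff.1 ht1
        · rw [← hg1] at ht1
          exact lt_iSup_iff.1 ht1
        · intro a ha b hb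
          simp only [Set.mem_ofPred_eq, lt_min_iff]
          refine ⟨lt_of_lt_of_le ?_ (H a b), ht1⟩
          calc ENNReal.ofReal t = ENNReal.ofReal t ^ (1 - s) * ENNReal.ofReal t ^ s := by
                rw [← ENNReal.rpow_add _ _ ht0 ENNReal.ofReal_ne_top]; simp
            _ < f a ^ (1 - s) * g b ^ s :=
                ENNReal.mul_lt_mul (ENNReal.rpow_lt_rpow ha (by linarith))
                  (ENNReal.rpow_lt_rpow hb hs0)
    _ = ∫⁻ x, min (h x) 1 :=
        (lintegral_eq_lintegral_meas_lt_of_le_one (hh.min measurable_const)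
          fun x => min_le_right _ _).symm
    _ ≤ ∫⁻ x, h x := lintegral_mono fun x => min_le_left _ _

theorem ENNReal.geom_mean_le_arith_mean2_ofReal {s : ℝ} (hs0 : 0 < s) (hs1 : s < 1)
    (a b : ℝ≥0∞) :
    a ^ (1 - s) * b ^ s ≤ ENNReal.ofReal (1 - s) * a + ENNReal.ofReal s * b := by
  have h1 : 0 < 1 - s := by linarith
  rcases eq_or_ne a ∞ with rfl | ha
  · rw [ENNReal.mul_top (by simpa using h1)]; simp
  rcases eq_or_ne b ∞ with rfl | hb
  · rw [ENNReal.mul_top (by simpa using hs0)]; simp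
  have := Real.geom_mean_le_arith_mean2_weighted h1.le hs0.le (ENNReal.toReal_nonneg (a := a))
    (ENNReal.toReal_nonneg (a := b)) (by ring)
  have h3 := ENNReal.ofReal_le_ofReal this
  rw [ENNReal.ofReal_mul (by positivity), ← ENNReal.ofReal_rpow_of_nonneg (by simp) h1.le,
    ← ENNReal.ofReal_rpow_of_nonneg (by simp) hs0.le,
    ENNReal.ofReal_add (by positivity) (by positivity), ENNReal.ofReal_mul h1.le,
    ENNReal.ofReal_mul hs0.le, ENNReal.ofReal_toReal ha, ENNReal.ofReal_toReal hb] at h3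
  exact h3

/-- The Prékopa-Leindler inequality on the real line, for bounded functions. -/
theorem prekopaLeindler_real {f g h : ℝ → ℝ≥0∞} {s : ℝ} (hs0 : 0 < s) (hs1 : s < 1)
    (hf : Measurable f) (hg : Measurable g) (hh : Measurable h)
    (hfb : ⨆ x, f x ≠ ∞) (hgb : ⨆ x, g x ≠ ∞)
    (H : ∀ x y, f x ^ (1 - s) * g y ^ s ≤ h ((1 - s) * x + s * y)) :
    (∫⁻ x, f x) ^ (1 - s) * (∫⁻ x, g x) ^ s ≤ ∫⁻ x, h x := by
  have h1 : 0 < 1 - s := by linarith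
  set a := ⨆ x, f x with ha
  set b := ⨆ x, g x with hb
  rcases eq_or_ne a 0 with ha0 | ha0
  · have : ∀ x, f x = 0 := fun x => le_antisymm (ha0 ▸ le_iSup f x) zero_le
    simp [this, h1]
  rcases eq_or_ne b 0 with hb0 | hb0
  · have : ∀ x, g x = 0 := fun x => le_antisymm (hb0 ▸ le_iSup g x) zero_le
    simp [this, hs0]
  have ha1 : a ^ (1 - s) ≠ 0 := by simp [ha0, hfb]
  have ha2 : a ^ (1 - s) ≠ ∞ := ENNReal.rpow_ne_top_of_nonneg h1.le hfb
  have hb1 : b ^ s ≠ 0 := by simp [hb0, hgb]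
  have hb2 : b ^ s ≠ ∞ := ENNReal.rpow_ne_top_of_nonneg hs0.le hgb
  set c := a ^ (1 - s) * b ^ s with hc
  have hc0 : c ≠ 0 := mul_ne_zero ha1 hb1
  have hc2 : c ≠ ∞ := ENNReal.mul_ne_top ha2 hb2
  have core := prekopaLeindler_of_iSup_eq_one (f := fun x => a⁻¹ * f x) (g := fun x => b⁻¹ * g x)
    (h := fun x => c⁻¹ * h x) hs0 hs1 (hf.const_mul _) (hg.const_mul _) (hh.const_mul _)
    (by rw [← ENNReal.mul_iSup, ← ha, ENNReal.inv_mul_cancel ha0 hfb])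
    (by rw [← ENNReal.mul_iSup, ← hb, ENNReal.inv_mul_cancel hb0 hgb])
    (by
      intro x y
      rw [ENNReal.mul_rpow_of_nonneg _ _ h1.le, ENNReal.mul_rpow_of_nonneg _ _ hs0.le,
        ENNReal.inv_rpow, ENNReal.inv_rpow, hc, ENNReal.mul_inv (Or.inl ha1) (Or.inl ha2)]
      calc _ = (a ^ (1 - s))⁻¹ * (b ^ s)⁻¹ * (f x ^ (1 - s) * g y ^ s) := by ring
        _ ≤ _ := by gcongr; exact H x y)
  have := (ENNReal.geom_mean_le_arith_mean2_ofReal hs0 hs1 _ _).trans core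
  rw [lintegral_const_mul _ hf, lintegral_const_mul _ hg, lintegral_const_mul _ hh,
    ENNReal.mul_rpow_of_nonneg _ _ h1.le, ENNReal.mul_rpow_of_nonneg _ _ hs0.le,
    ENNReal.inv_rpow, ENNReal.inv_rpow] at this
  have e : (a ^ (1 - s))⁻¹ * (∫⁻ x, f x) ^ (1 - s) * ((b ^ s)⁻¹ * (∫⁻ x, g x) ^ s) =
      c⁻¹ * ((∫⁻ x, f x) ^ (1 - s) * (∫⁻ x, g x) ^ s) := by
    rw [hc, ENNReal.mul_inv (Or.inl ha1) (Or.inl ha2)]; ring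
  rw [e] at this
  exact (ENNReal.mul_le_mul_iff_right (ENNReal.inv_ne_zero.2 hc2) (ENNReal.inv_ne_top.2 hc0)).1 this

instance instIsProbabilityMeasureGaussianN (n : ℕ) : IsProbabilityMeasure (gaussianN n) := by
  unfold gaussianN; infer_instance

theorem measurePreserving_insertNth_gaussianN {n : ℕ} (i : Fin (n + 1)) :
    MeasurePreserving (fun p : ℝ × (Fin n → ℝ) => (i.insertNth p.1 p.2 : Fin (n + 1) → ℝ))
      ((gaussianReal 0 1).prod (gaussianN n)) (gaussianN (n + 1)) :=
  (measurePreserving_piFinSuccAbove (fun _ : Fin (n + 1) => gaussianReal 0 1) i).symm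

theorem lintegral_gaussianN_succ {n : ℕ} (i : Fin (n + 1)) {f : (Fin (n + 1) → ℝ) → ℝ≥0∞}
    (hf : Measurable f) :
    ∫⁻ x, f x ∂(gaussianN (n + 1)) =
      ∫⁻ t, ∫⁻ y, f (i.insertNth t y) ∂(gaussianN n) ∂(gaussianReal 0 1) := by
  have h := measurePreserving_insertNth_gaussianN i
  rw [← h.lintegral_comp hf]
  exact lintegral_prod (fun p : ℝ × (Fin n → ℝ) => f (i.insertNth p.1 p.2))
    (hf.comp h.measurable).aemeasurable

theorem gaussianPDF_logConcave {s : ℝ} (hs0 : 0 < s) (hs1 : s < 1) (x y : ℝ) :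
    gaussianPDF 0 1 x ^ (1 - s) * gaussianPDF 0 1 y ^ s ≤
      gaussianPDF 0 1 ((1 - s) * x + s * y) := by
  have h1 : 0 < 1 - s := by linarith
  have hp := gaussianPDFReal_nonneg 0 1
  unfold gaussianPDF
  rw [ENNReal.ofReal_rpow_of_nonneg (hp x) h1.le, ENNReal.ofReal_rpow_of_nonneg (hp y) hs0.le,
    ← ENNReal.ofReal_mul (Real.rpow_nonneg (hp x) _)]
  refine ENNReal.ofReal_le_ofReal ?_
  unfold gaussianPDFReal
  set c := (√(2 * Real.pi * (1 : NNReal)))⁻¹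
  have hc : 0 < c := by positivity
  rw [Real.mul_rpow hc.le (Real.exp_pos _).le, Real.mul_rpow hc.le (Real.exp_pos _).le,
    ← Real.exp_mul, ← Real.exp_mul]
  calc _ = (c ^ (1 - s) * c ^ s) * (Real.exp (-(x - 0) ^ 2 / (2 * (1 : NNReal)) * (1 - s)) *
        Real.exp (-(y - 0) ^ 2 / (2 * (1 : NNReal)) * s)) := by ring
    _ = c * Real.exp (-(x - 0) ^ 2 / (2 * (1 : NNReal)) * (1 - s) +
          -(y - 0) ^ 2 / (2 * (1 : NNReal)) * s) := by
        rw [← Real.rpow_add hc, ← Real.exp_add]; simp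
    _ ≤ _ := by
        gcongr
        simp only [NNReal.coe_one]
        nlinarith [mul_nonneg (mul_nonneg h1.le hs0.le) (sq_nonneg (x - y))]

theorem gaussianPDF_le_one (x : ℝ) : gaussianPDF 0 1 x ≤ 1 := by
  unfold gaussianPDF
  refine ENNReal.ofReal_le_one.2 ?_
  unfold gaussianPDFReal
  have h2 : 1 ≤ √(2 * Real.pi * (1 : NNReal)) := by
    rw [Real.one_le_sqrt]
    simp only [NNReal.coe_one]
    nlinarith [Real.pi_gt_three]
  have h3 : (√(2 * Real.pi * (1 : NNReal)))⁻¹ ≤ 1 := inv_le_one_of_one_le₀ h2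
  have h4 : Real.exp (-(x - 0) ^ 2 / (2 * (1 : NNReal))) ≤ 1 := by
    rw [Real.exp_le_one_iff]
    simp only [NNReal.coe_one]
    nlinarith [sq_nonneg (x - 0)]
  exact mul_le_one₀ h3 (Real.exp_pos _).le h4

theorem lintegral_gaussianReal_eq {f : ℝ → ℝ≥0∞} (hf : Measurable f) :
    ∫⁻ x, f x ∂(gaussianReal 0 1) = ∫⁻ x, gaussianPDF 0 1 x * f x := by
  rw [gaussianReal_of_var_ne_zero 0 one_ne_zero,
    lintegral_withDensity_eq_lintegral_mul _ (measurable_gaussianPDF 0 1) hf]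
  rfl

theorem logConcave_mul {p q r u v w P Q : ℝ≥0∞} {s : ℝ} (hs0 : 0 < s) (hs1 : s < 1)
    (h : p ^ (1 - s) * q ^ s ≤ r) (h' : u ^ (1 - s) * v ^ s ≤ w) (hP : P = p * u)
    (hQ : Q = q * v) : P ^ (1 - s) * Q ^ s ≤ r * w := by
  have h1 : 0 < 1 - s := by linarith
  rw [hP, hQ, ENNReal.mul_rpow_of_nonneg _ _ h1.le, ENNReal.mul_rpow_of_nonneg _ _ hs0.le]
  calc _ = (p ^ (1 - s) * q ^ s) * (u ^ (1 - s) * v ^ s) := by ring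
    _ ≤ _ := mul_le_mul' h h'

theorem prekopaLeindler_gaussianReal {f g h : ℝ → ℝ≥0∞} {s : ℝ} (hs0 : 0 < s) (hs1 : s < 1)
    (hf : Measurable f) (hg : Measurable g) (hh : Measurable h)
    (hf1 : ∀ x, f x ≤ 1) (hg1 : ∀ x, g x ≤ 1)
    (H : ∀ x y, f x ^ (1 - s) * g y ^ s ≤ h ((1 - s) * x + s * y)) :
    (∫⁻ x, f x ∂(gaussianReal 0 1)) ^ (1 - s) * (∫⁻ x, g x ∂(gaussianReal 0 1)) ^ s ≤
      ∫⁻ x, h x ∂(gaussianReal 0 1) := by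
  rw [lintegral_gaussianReal_eq hf, lintegral_gaussianReal_eq hg, lintegral_gaussianReal_eq hh]
  have hm := measurable_gaussianPDF 0 1
  refine prekopaLeindler_real hs0 hs1 (hm.mul hf) (hm.mul hg) (hm.mul hh) ?_ ?_ fun x y =>
    logConcave_mul hs0 hs1 (gaussianPDF_logConcave hs0 hs1 x y) (H x y) rfl rfl
  · refine ne_top_of_le_ne_top ENNReal.one_ne_top (iSup_le fun x => ?_)
    exact mul_le_one' (gaussianPDF_le_one x) (hf1 x)
  · refine ne_top_of_le_ne_top ENNReal.one_ne_top (iSup_le fun x => ?_)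
    exact mul_le_one' (gaussianPDF_le_one x) (hg1 x)

theorem insertNth_convex_comb {n : ℕ} (i : Fin (n + 1)) (a b t u : ℝ) (x y : Fin n → ℝ) :
    (i.insertNth (a * t + b * u) (a • x + b • y) : Fin (n + 1) → ℝ) =
      a • (i.insertNth t x : Fin (n + 1) → ℝ) + b • (i.insertNth u y : Fin (n + 1) → ℝ) := by
  ext j
  rcases Fin.eq_self_or_eq_succAbove i j with rfl | ⟨k, rfl⟩ <;> simp

theorem measurable_insertNth_pair {n : ℕ} (i : Fin (n + 1)) :
    Measurable (fun p : ℝ × (Fin n → ℝ) => (i.insertNth p.1 p.2 : Fin (n + 1) → ℝ)) :=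
  (MeasurableEquiv.piFinSuccAbove (fun _ : Fin (n + 1) => ℝ) i).symm.measurable

/-- The Prékopa-Leindler inequality for the standard Gaussian measure. -/
theorem prekopaLeindler_gaussianN {n : ℕ} {s : ℝ} (hs0 : 0 < s) (hs1 : s < 1)
    {f g h : (Fin n → ℝ) → ℝ≥0∞}
    (hf : Measurable f) (hg : Measurable g) (hh : Measurable h)
    (hf1 : ∀ x, f x ≤ 1) (hg1 : ∀ x, g x ≤ 1)
    (H : ∀ x y, f x ^ (1 - s) * g y ^ s ≤ h ((1 - s) • x + s • y)) :
    (∫⁻ x, f x ∂(gaussianN n)) ^ (1 - s) * (∫⁻ x, g x ∂(gaussianN n)) ^ s ≤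
      ∫⁻ x, h x ∂(gaussianN n) := by
  induction n with
  | zero =>
    have : gaussianN 0 = Measure.dirac default := by
      unfold gaussianN
      rw [Measure.pi_of_empty _ default]
    rw [this, lintegral_dirac' _ hf, lintegral_dirac' _ hg, lintegral_dirac' _ hh]
    convert H default default using 2
  | succ n ih =>
    have hi := measurable_insertNth_pair (0 : Fin (n + 1))
    have hsec : ∀ t : ℝ, Measurable fun y : Fin n → ℝ =>
        ((0 : Fin (n + 1)).insertNth t y : Fin (n + 1) → ℝ) := fun t =>
      hi.comp measurable_prodMk_left
    rw [lintegral_gaussianN_succ 0 hf, lintegral_gaussianN_succ 0 hg, lintegral_gaussianN_succ 0 hh]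
    have hle : ∀ u : (Fin (n + 1) → ℝ) → ℝ≥0∞, (∀ x, u x ≤ 1) → ∀ t : ℝ,
        ∫⁻ y, u ((0 : Fin (n + 1)).insertNth t y) ∂(gaussianN n) ≤ 1 := by
      intro u hu t
      calc _ ≤ ∫⁻ _, 1 ∂(gaussianN n) := lintegral_mono fun y => hu _
        _ = 1 := by simp
    refine prekopaLeindler_gaussianReal hs0 hs1 (hf.comp hi).lintegral_prod_right'
      (hg.comp hi).lintegral_prod_right' (hh.comp hi).lintegral_prod_right' (hle f hf1)
      (hle g hg1) fun t u => ?_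
    refine ih (hf.comp (hsec t)) (hg.comp (hsec u)) (hh.comp (hsec _)) (fun _ => hf1 _)
      (fun _ => hg1 _) fun x y => ?_
    simp only [insertNth_convex_comb]
    exact H _ _

/-- The density of the `i`-th marginal of the Gaussian measure restricted to `K`. -/
noncomputable def gaussianMarginal {n : ℕ} (i : Fin (n + 1)) (K : Set (Fin (n + 1) → ℝ)) (t : ℝ) :
    ℝ≥0∞ :=
  gaussianPDF 0 1 t * ∫⁻ y, K.indicator 1 (i.insertNth t y) ∂(gaussianN n)

theorem gaussianMarginal_le_one {n : ℕ} (i : Fin (n + 1)) (K : Set (Fin (n + 1) → ℝ)) (t : ℝ) :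
    gaussianMarginal i K t ≤ 1 := by
  refine mul_le_one' (gaussianPDF_le_one t) ?_
  calc _ ≤ ∫⁻ _, 1 ∂(gaussianN n) := by
        refine lintegral_mono fun y => ?_
        exact Set.indicator_le_self' (f := (1 : (Fin (n + 1) → ℝ) → ℝ≥0∞)) (by simp) _
    _ = 1 := by simp

theorem gaussianMarginal_logConcave {n : ℕ} (i : Fin (n + 1)) {K : Set (Fin (n + 1) → ℝ)}
    (hK : MeasurableSet K) (hc : Convex ℝ K) {s : ℝ} (hs0 : 0 < s) (hs1 : s < 1) (x y : ℝ) :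
    gaussianMarginal i K x ^ (1 - s) * gaussianMarginal i K y ^ s ≤
      gaussianMarginal i K ((1 - s) * x + s * y) := by
  have hsec : ∀ t : ℝ, Measurable fun y : Fin n → ℝ => (i.insertNth t y : Fin (n + 1) → ℝ) :=
    fun t => (measurable_insertNth_pair i).comp measurable_prodMk_left
  have hm : Measurable (K.indicator (1 : (Fin (n + 1) → ℝ) → ℝ≥0∞)) := measurable_one.indicator hK
  have h1 : 0 < 1 - s := by linarith
  refine logConcave_mul hs0 hs1 (gaussianPDF_logConcave hs0 hs1 x y)
    (prekopaLeindler_gaussianN hs0 hs1 (hm.comp (hsec x)) (hm.comp (hsec y)) (hm.comp (hsec _))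
      (fun _ => Set.indicator_le_self' (by simp) _) (fun _ => Set.indicator_le_self' (by simp) _)
      fun u v => ?_) rfl rfl
  simp only [Function.comp, insertNth_convex_comb]
  by_cases hu : (i.insertNth x u : Fin (n + 1) → ℝ) ∈ K
  · by_cases hv : (i.insertNth y v : Fin (n + 1) → ℝ) ∈ K
    · simp [hu, hv, hc hu hv h1.le hs0.le (by ring)]
    · simp [hv, hs0]
  · simp [hu, h1]

theorem lintegral_gaussianMarginal {n : ℕ} (i : Fin (n + 1)) {K : Set (Fin (n + 1) → ℝ)}
    (hK : MeasurableSet K) {u : ℝ → ℝ≥0∞} (hu : Measurable u) :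
    ∫⁻ t, gaussianMarginal i K t * u t = ∫⁻ x in K, u (x i) ∂(gaussianN (n + 1)) := by
  have hm : Measurable (K.indicator (1 : (Fin (n + 1) → ℝ) → ℝ≥0∞)) := measurable_one.indicator hK
  have hi := measurable_insertNth_pair i
  have e : ∀ x, K.indicator (fun x => u (x i)) x = K.indicator 1 x * u (x i) := by
    intro x; by_cases hx : x ∈ K <;> simp [hx]
  rw [← lintegral_indicator hK]
  simp_rw [e]
  have hmu : Measurable fun x : Fin (n + 1) → ℝ => K.indicator 1 x * u (x i) :=
    hm.mul (hu.comp (measurable_pi_apply i))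
  rw [lintegral_gaussianN_succ i hmu, lintegral_gaussianReal_eq]
  · refine lintegral_congr fun t => ?_
    rw [gaussianMarginal, mul_assoc]
    simp only [Fin.insertNth_apply_same]
    rw [lintegral_mul_const]
    exact hm.comp (hi.comp measurable_prodMk_left)
  · exact (hmu.comp hi).lintegral_prod_right'

theorem exists_separated_of_lt_volume {δ : ℝ} (hδ : 0 ≤ δ) (d : ℕ) {S : Set ℝ} (hb : BddBelow S)
    (hS : ENNReal.ofReal (d * δ) < volume S) :
    ∃ x : ℕ → ℝ, (∀ i ≤ d, x i ∈ S) ∧ ∀ i < d, x i + δ ≤ x (i + 1) := by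
  induction d generalizing S with
  | zero =>
    have : S.Nonempty := by
      rw [Set.nonempty_iff_ne_empty]
      rintro rfl
      simp at hS
    obtain ⟨a, ha⟩ := this
    exact ⟨fun _ => a, fun _ _ => ha, fun i hi => absurd hi (by simp)⟩
  | succ d ih =>
    obtain ⟨v, hv0, hv1, hv2⟩ := ENNReal.lt_iff_exists_real_btwn.1 hS
    have hv : ((d + 1 : ℕ) : ℝ) * δ < v := (ENNReal.ofReal_lt_ofReal_iff_of_nonneg (by positivity)).1 hv1
    have hne : S.Nonempty := by
      rw [Set.nonempty_iff_ne_empty]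
      rintro rfl
      simp at hS
    obtain ⟨x0, hx0, hx0'⟩ := exists_lt_of_csInf_lt hne
      (show sInf S < sInf S + (v - ((d + 1 : ℕ) : ℝ) * δ) by linarith)
    have hS' : ENNReal.ofReal (d * δ) < volume (S ∩ Set.Ici (x0 + δ)) := by
      by_contra hcon
      rw [not_lt] at hcon
      have h1 : S ⊆ Set.Ico (sInf S) (x0 + δ) ∪ (S ∩ Set.Ici (x0 + δ)) := by
        intro y hy
        rcases lt_or_ge y (x0 + δ) with h | h
        · exact Or.inl ⟨csInf_le hb hy, h⟩
        · exact Or.inr ⟨hy, h⟩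
      have h2 : volume S ≤ ENNReal.ofReal (x0 + δ - sInf S) + ENNReal.ofReal (d * δ) := by
        refine (measure_mono h1).trans ((measure_union_le _ _).trans ?_)
        rw [Real.volume_Ico]
        gcongr
      have h3 := csInf_le hb hx0
      rw [← ENNReal.ofReal_add (by linarith) (by positivity)] at h2
      have h4 := hv2.trans_le h2
      have h5 := (ENNReal.ofReal_lt_ofReal_iff_of_nonneg hv0).1 h4
      push_cast at hx0' h5
      linarith
    obtain ⟨x, hx, hx'⟩ := ih (hb.mono Set.inter_subset_left) hS'
    refine ⟨fun i => Nat.casesOn i x0 x, ?_, ?_⟩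
    · rintro (_ | i) hi
      · exact hx0
      · exact (hx i (by omega)).1
    · rintro (_ | i) hi
      · exact (hx 0 (by omega)).2
      · exact hx' i (by omega)

theorem le_of_forall_add_le_succ {δ : ℝ} {d : ℕ} {x : ℕ → ℝ} (hx : ∀ i < d, x i + δ ≤ x (i + 1)) (i j : ℕ)
    (hij : i ≤ j) (hj : j ≤ d) : ((j : ℝ) - i) * δ ≤ x j - x i := by
  induction j, hij using Nat.le_induction with
  | base => simp
  | succ j hij ih =>
    have := ih (by omega)
    have := hx j (by omega)
    push_cast
    linarith

theorem abs_sub_mul_le_of_separated {δ : ℝ} {d : ℕ} {x : ℕ → ℝ}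
    (hx : ∀ i < d, x i + δ ≤ x (i + 1)) {i j : ℕ} (hi : i ≤ d) (hj : j ≤ d) :
    |(i : ℝ) - j| * δ ≤ |x i - x j| := by
  rcases le_total i j with h | h
  · have := le_of_forall_add_le_succ hx i j h hj
    have h' : (i : ℝ) ≤ j := by exact_mod_cast h
    rw [abs_sub_comm, abs_sub_comm (x i), abs_of_nonneg (sub_nonneg.2 h')]
    exact this.trans (le_abs_self _)
  · have := le_of_forall_add_le_succ hx j i h hi
    have h' : (j : ℝ) ≤ i := by exact_mod_cast h
    rw [abs_of_nonneg (sub_nonneg.2 h')]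
    exact this.trans (le_abs_self _)

theorem prod_abs_sub_erase (d i : ℕ) (hi : i ≤ d) :
    ∏ k ∈ (Finset.range (d + 1)).erase i, |(i : ℝ) - k| = (i.factorial : ℝ) * (d - i).factorial := by
  have h1 : (Finset.range (d + 1)).erase i = Finset.range i ∪ (Finset.range (d - i)).image (fun k => i + 1 + k) := by
    ext k
    simp only [Finset.mem_erase, Finset.mem_range, Finset.mem_union, Finset.mem_image]
    constructor
    · rintro ⟨h1, h2⟩
      rcases lt_or_gt_of_ne h1 with h | h
      · exact Or.inl h
      · exact Or.inr ⟨k - (i + 1), by omega, by omega⟩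
    · rintro (h | ⟨a, ha, rfl⟩) <;> omega
  rw [h1, Finset.prod_union, Finset.prod_image (by intro a _ b _ h; simpa using h)]
  · congr 1
    · rw [← Finset.prod_range_add_one_eq_factorial, ← Finset.prod_range_reflect]
      push_cast
      refine Finset.prod_congr rfl fun k hk => ?_
      have hk := Finset.mem_range.1 hk
      rw [show i - 1 - k = i - (k + 1) by omega, Nat.cast_sub (by omega)]
      push_cast
      rw [show (i : ℝ) - (i - (k + 1)) = k + 1 by ring]
      exact abs_of_nonneg (by positivity)
    · rw [← Finset.prod_range_add_one_eq_factorial]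
      push_cast
      refine Finset.prod_congr rfl fun k hk => ?_
      rw [show (i : ℝ) - (i + 1 + k) = -(k + 1) by ring, abs_neg]
      exact abs_of_nonneg (by positivity)
  · rw [Finset.disjoint_left]
    intro a ha hb
    simp only [Finset.mem_range, Finset.mem_image] at ha hb
    obtain ⟨b, _, rfl⟩ := hb
    omega

theorem sum_inv_factorial_mul_factorial (d : ℕ) :
    ∑ i ∈ Finset.range (d + 1), ((i.factorial : ℝ) * (d - i).factorial)⁻¹ =
      2 ^ d / d.factorial := by
  rw [eq_div_iff (by positivity), Finset.sum_mul]
  have := Nat.sum_range_choose d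
  rw [show (2 : ℝ) ^ d = ((2 ^ d : ℕ) : ℝ) by push_cast; rfl, ← this]
  push_cast
  refine Finset.sum_congr rfl fun i hi => ?_
  rw [Nat.cast_choose ℝ (by have := Finset.mem_range.1 hi; omega)]
  field_simp

/-- A Remez-type inequality for a polynomial that is bounded on separated points. -/
theorem abs_eval_le_of_separated {q : Polynomial ℝ} {d : ℕ} (hq : q.natDegree ≤ d) {δ c R t : ℝ}
    (hδ : 0 < δ) (hc : 0 ≤ c) {x : ℕ → ℝ} (hx : ∀ i < d, x i + δ ≤ x (i + 1))
    (hqx : ∀ i ≤ d, |q.eval (x i)| ≤ c) (hR : ∀ i ≤ d, |t - x i| ≤ R) :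
    |q.eval t| ≤ c * ((2 * R / δ) ^ d / d.factorial) := by
  have hR0 : 0 ≤ R := (abs_nonneg _).trans (hR 0 (by omega))
  have hinj : Set.InjOn x (Finset.range (d + 1) : Set ℕ) := by
    intro i hi j hj hij
    simp only [Finset.coe_range, Set.mem_Iio] at hi hj
    have := abs_sub_mul_le_of_separated hx (show i ≤ d by omega) (show j ≤ d by omega)
    rw [hij, sub_self, abs_zero] at this
    have h0 : |(i : ℝ) - j| = 0 := by
      by_contra hne
      have : 0 < |(i : ℝ) - j| := lt_of_le_of_ne (abs_nonneg _) (Ne.symm hne)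
      nlinarith [mul_pos this hδ]
    exact_mod_cast sub_eq_zero.1 (abs_eq_zero.1 h0)
  have hdeg : q.degree < (Finset.range (d + 1)).card := by
    rw [Finset.card_range]
    refine lt_of_le_of_lt Polynomial.degree_le_natDegree ?_
    exact_mod_cast Nat.lt_succ_of_le hq
  have hL := Lagrange.eq_interpolate hinj hdeg
  have hev : q.eval t = ∑ i ∈ Finset.range (d + 1),
      q.eval (x i) * (Lagrange.basis (Finset.range (d + 1)) x i).eval t := by
    conv_lhs => rw [hL]
    rw [Lagrange.interpolate_apply, Polynomial.eval_finsetSum]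
    simp
  have hbasis : ∀ i ∈ Finset.range (d + 1),
      |(Lagrange.basis (Finset.range (d + 1)) x i).eval t| ≤
        (R / δ) ^ d * ((i.factorial : ℝ) * (d - i).factorial)⁻¹ := by
    intro i hi
    have hi' : i ≤ d := by have := Finset.mem_range.1 hi; omega
    have hcard : ((Finset.range (d + 1)).erase i).card = d := by
      rw [Finset.card_erase_of_mem hi]; simp
    rw [Lagrange.basis, Polynomial.eval_prod, Finset.abs_prod, ← prod_abs_sub_erase d i hi',
      ← Finset.prod_inv_distrib]
    have hpow : (R / δ) ^ d = ∏ _k ∈ (Finset.range (d + 1)).erase i, (R / δ) := by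
      rw [Finset.prod_const, hcard]
    rw [hpow, ← Finset.prod_mul_distrib]
    refine Finset.prod_le_prod (fun _ _ => abs_nonneg _) fun k hk => ?_
    have hk1 := Finset.ne_of_mem_erase hk
    have hk' : k ≤ d := by have := Finset.mem_range.1 (Finset.mem_of_mem_erase hk); omega
    have hsep := abs_sub_mul_le_of_separated hx hi' hk'
    have hpos : 0 < |(i : ℝ) - k| := by
      rw [abs_pos, sub_ne_zero]
      exact_mod_cast hk1.symm
    rw [Lagrange.basisDivisor]
    simp only [Polynomial.eval_mul, Polynomial.eval_C, Polynomial.eval_sub, Polynomial.eval_X, abs_mul, abs_inv]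
    calc |x i - x k|⁻¹ * |t - x k| ≤ (|(i : ℝ) - k| * δ)⁻¹ * R := by
          gcongr
          exact hR k hk'
      _ = R / δ * |(i : ℝ) - k|⁻¹ := by rw [mul_inv]; ring
  rw [hev]
  calc _ ≤ ∑ i ∈ Finset.range (d + 1), c * ((R / δ) ^ d * ((i.factorial : ℝ) * (d - i).factorial)⁻¹) := by
        refine (Finset.abs_sum_le_sum_abs _ _).trans (Finset.sum_le_sum fun i hi => ?_)
        rw [abs_mul]
        exact mul_le_mul (hqx i (by have := Finset.mem_range.1 hi; omega)) (hbasis i hi)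
          (abs_nonneg _) hc
    _ = c * ((2 * R / δ) ^ d / d.factorial) := by
        rw [← Finset.mul_sum, ← Finset.mul_sum, sum_inv_factorial_mul_factorial,
          show 2 * R / δ = (R / δ) * 2 by ring, mul_pow]
        ring

theorem lintegral_exp_neg_abs_le {τ : ℝ} (hτ : 0 < τ) (a : ℝ) :
    ∫⁻ x, ENNReal.ofReal (Real.exp (-(|x - a| / τ))) ≤ ENNReal.ofReal (2 * τ) := by
  have hr : 0 < τ⁻¹ := by positivity
  have hm : Measurable fun x => exponentialPDF τ⁻¹ x :=
    (measurable_exponentialPDFReal τ⁻¹).ennreal_ofReal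
  calc _ = ∫⁻ x, ENNReal.ofReal (Real.exp (-(|x| / τ))) :=
        lintegral_sub_right_eq_self (fun x => ENNReal.ofReal (Real.exp (-(|x| / τ)))) a
    _ ≤ ∫⁻ x, ENNReal.ofReal τ * (exponentialPDF τ⁻¹ x + exponentialPDF τ⁻¹ (-x)) := by
        refine lintegral_mono fun x => ?_
        have key : ∀ y : ℝ, 0 ≤ y → ENNReal.ofReal (Real.exp (-(y / τ))) =
            ENNReal.ofReal τ * exponentialPDF τ⁻¹ y := by
          intro y hy
          rw [exponentialPDF_eq, if_pos hy, ← ENNReal.ofReal_mul hτ.le]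
          congr 1
          field_simp
        rcases le_total 0 x with h | h
        · rw [abs_of_nonneg h, key x h]
          gcongr
          exact le_self_add
        · rw [abs_of_nonpos h, key (-x) (by linarith)]
          gcongr
          exact le_add_self
    _ = ENNReal.ofReal (2 * τ) := by
        have hm' : Measurable fun x => exponentialPDF τ⁻¹ x + exponentialPDF τ⁻¹ (-x) :=
          hm.add (hm.comp measurable_neg)
        rw [lintegral_const_mul _ hm', lintegral_add_left hm,
          lintegral_neg_eq_self (fun x => exponentialPDF τ⁻¹ x), lintegral_exponentialPDF_eq_one hr,
          mul_comm, ENNReal.ofReal_mul two_pos.le]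
        norm_num

theorem exp_three_lt : Real.exp 3 < 21 := by
  have h := Real.exp_one_lt_d9
  have : Real.exp 3 = Real.exp 1 ^ 3 := by rw [← Real.exp_nat_mul]; norm_num
  rw [this]
  calc Real.exp 1 ^ 3 < 2.7182818286 ^ 3 := by gcongr
    _ < 21 := by norm_num

theorem logConcave_le_exp_neg {f : ℝ → ℝ} (h0 : ∀ x, 0 ≤ f x)
    (hlc : ∀ s, 0 < s → s < 1 → ∀ x y, f x ^ (1 - s) * f y ^ s ≤ f ((1 - s) * x + s * y))
    {M m s₀ : ℝ} (hM : 0 < M) (hm : 0 < m) (hfM : ∀ x, f x ≤ M) (hs₀ : M * Real.exp (-1) ≤ f s₀)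
    (hfm : ∫⁻ x, ENNReal.ofReal (f x) = ENNReal.ofReal m) (x : ℝ) :
    f x ≤ M * Real.exp (2 - 2 * (|x - s₀| / (21 * m / M))) := by
  set τ := 21 * m / M with hτ
  have hτ0 : 0 < τ := by positivity
  by_contra hcon
  rw [not_le] at hcon
  rcases le_or_gt |x - s₀| τ with hD | hD
  · have : |x - s₀| / τ ≤ 1 := (div_le_one hτ0).2 hD
    have : 1 ≤ Real.exp (2 - 2 * (|x - s₀| / τ)) := Real.one_le_exp (by linarith)
    have := hfM x
    nlinarith
  set D := |x - s₀|
  have hD0 : 0 < D := hτ0.trans hD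
  have hx : M * Real.exp (-2 * (D / τ)) ≤ f x := by
    refine le_trans ?_ hcon.le
    gcongr
    linarith
  have hlow : ∀ θ, 0 < θ → θ < τ / D → M * Real.exp (-3) ≤ f ((1 - θ) * s₀ + θ * x) := by
    intro θ hθ hθ1
    have hθ2 : θ < 1 := hθ1.trans ((div_lt_one hD0).2 hD)
    refine le_trans ?_ (hlc θ hθ hθ2 s₀ x)
    calc M * Real.exp (-3) ≤ M * Real.exp (-1 * (1 - θ) + -2 * (D / τ) * θ) := by
          gcongr
          have : D / τ * θ ≤ 1 := by
            rw [lt_div_iff₀ hD0] at hθ1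
            rw [div_mul_eq_mul_div, div_le_one hτ0]; linarith
          nlinarith
      _ = (M ^ (1 - θ) * M ^ θ) * (Real.exp (-1 * (1 - θ)) * Real.exp (-2 * (D / τ) * θ)) := by
          rw [← Real.rpow_add hM, ← Real.exp_add]; simp
      _ = (M * Real.exp (-1)) ^ (1 - θ) * (M * Real.exp (-2 * (D / τ))) ^ θ := by
          rw [Real.mul_rpow hM.le (Real.exp_pos _).le, Real.mul_rpow hM.le (Real.exp_pos _).le,
            ← Real.exp_mul, ← Real.exp_mul]
          ring
      _ ≤ _ := by
          have : 0 ≤ 1 - θ := by linarith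
          have := Real.rpow_nonneg (h0 s₀) (1 - θ)
          gcongr
  have hIoo : ∃ a b : ℝ, b - a = τ ∧ ∀ y ∈ Set.Ioo a b, M * Real.exp (-3) ≤ f y := by
    rcases le_total s₀ x with h | h
    · have hDx : D = x - s₀ := abs_of_nonneg (by linarith)
      refine ⟨s₀, s₀ + τ, by ring, fun y hy => ?_⟩
      have := hlow ((y - s₀) / D) (div_pos (by linarith [hy.1]) hD0) (by
        gcongr; linarith [hy.2])
      convert this using 2
      field_simp
      rw [hDx]; ring
    · have hDx : D = s₀ - x := by rw [← abs_of_nonneg (sub_nonneg.2 h), abs_sub_comm]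
      refine ⟨s₀ - τ, s₀, by ring, fun y hy => ?_⟩
      have := hlow ((s₀ - y) / D) (div_pos (by linarith [hy.2]) hD0) (by
        gcongr; linarith [hy.1])
      convert this using 2
      field_simp
      rw [hDx]; ring
  obtain ⟨a, b, hab, hy⟩ := hIoo
  have h1 : ENNReal.ofReal (M * Real.exp (-3)) * ENNReal.ofReal τ ≤ ENNReal.ofReal m := by
    rw [← hfm, ← hab, ← Real.volume_Ioo, ← setLIntegral_const]
    exact (setLIntegral_mono' measurableSet_Ioo fun y hy' => ENNReal.ofReal_le_ofReal (hy y hy')).trans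
      (setLIntegral_le_lintegral _ _)
  rw [← ENNReal.ofReal_mul (by positivity), ENNReal.ofReal_le_ofReal_iff hm.le] at h1
  have h2 : M * Real.exp (-3) * τ = 21 * Real.exp (-3) * m := by
    rw [hτ]; field_simp
  rw [h2, Real.exp_neg] at h1
  have h3 := exp_three_lt
  have h4 : 1 < 21 * (Real.exp 3)⁻¹ := by
    rw [← div_eq_mul_inv, lt_div_iff₀ (Real.exp_pos 3)]; linarith
  nlinarith

theorem exists_shell_of_le_measure {ν : Measure ℝ} {E : Set ℝ} {w : ℝ → ℝ} {c : ℝ} (hc : 0 < c)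
    (hE : ENNReal.ofReal c ≤ ν E) :
    ∃ j : ℕ, ENNReal.ofReal (c / 2 ^ (j + 2)) < ν (E ∩ {x | ⌊w x⌋₊ = j}) := by
  by_contra! hcon
  have hU : E = ⋃ j : ℕ, E ∩ {x | ⌊w x⌋₊ = j} := by
    ext x; simp
  have h1 : ν E ≤ ∑' j : ℕ, ENNReal.ofReal (c / 2 ^ (j + 2)) := by
    conv_lhs => rw [hU]
    exact (measure_iUnion_le _).trans (ENNReal.tsum_le_tsum hcon)
  have h2 : HasSum (fun j : ℕ => c / 2 ^ (j + 2)) (c / 2) := by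
    have := (hasSum_geometric_two).mul_left (c / 4)
    rw [show c / 4 * 2 = c / 2 by ring] at this
    have e : (fun j : ℕ => c / 2 ^ (j + 2)) = fun j : ℕ => c / 4 * (1 / 2) ^ j := by
      funext j
      rw [pow_add, one_div, inv_pow]
      field_simp
      norm_num
    rw [e]
    exact this
  rw [← ENNReal.ofReal_tsum_of_nonneg (fun j => by positivity) h2.summable, h2.tsum_eq] at h1
  have := hE.trans h1
  rw [ENNReal.ofReal_le_ofReal_iff (by positivity)] at this
  linarith

theorem exp_two_le : Real.exp 2 ≤ 8 := by
  have h := Real.exp_one_lt_d9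
  have : Real.exp 2 = Real.exp 1 ^ 2 := by rw [← Real.exp_nat_mul]; norm_num
  rw [this]
  calc Real.exp 1 ^ 2 ≤ 2.7182818286 ^ 2 := by gcongr
    _ ≤ 8 := by norm_num

theorem four_le_exp_two : (4 : ℝ) ≤ Real.exp 2 := by
  have h := Real.exp_one_gt_d9
  have : Real.exp 2 = Real.exp 1 ^ 2 := by rw [← Real.exp_nat_mul]; norm_num
  rw [this]
  calc (4 : ℝ) ≤ 2.7182818283 ^ 2 := by norm_num
    _ ≤ Real.exp 1 ^ 2 := by gcongr

/-- A small-ball inequality for polynomials under a log-concave density on the line. -/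
theorem lintegral_abs_eval_le_of_logConcave {f : ℝ → ℝ} (h0 : ∀ x, 0 ≤ f x)
    (hlc : ∀ s, 0 < s → s < 1 → ∀ x y, f x ^ (1 - s) * f y ^ s ≤ f ((1 - s) * x + s * y))
    {B m : ℝ} (hB : ∀ x, f x ≤ B) (hm : 0 < m)
    (hfm : ∫⁻ x, ENNReal.ofReal (f x) = ENNReal.ofReal m)
    {q : Polynomial ℝ} {d : ℕ} (hd : 1 ≤ d) (hq : q.natDegree ≤ d) {c b : ℝ} (hc : 0 ≤ c)
    (hb : 0 < b)
    (hE : ENNReal.ofReal (b * m) ≤ ∫⁻ x in {x | |q.eval x| ≤ c}, ENNReal.ofReal (f x)) :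
    ∫⁻ x, ENNReal.ofReal (|q.eval x| * f x) ≤
      ENNReal.ofReal (c * (2370816 * d / b) ^ d * m) := by
  have hbdd : BddAbove (Set.range f) := ⟨B, by rintro _ ⟨x, rfl⟩; exact hB x⟩
  set M := ⨆ x, f x with hMdef
  have hfM : ∀ x, f x ≤ M := fun x => le_ciSup hbdd x
  have hM : 0 < M := by
    by_contra hM
    have : ∀ x, f x = 0 := fun x => le_antisymm ((hfM x).trans (not_lt.1 hM)) (h0 x)
    simp only [this, ENNReal.ofReal_zero, lintegral_const, zero_mul] at hfm
    have := ENNReal.ofReal_pos.2 hm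
    rw [← hfm] at this
    exact lt_irrefl _ this
  obtain ⟨s₀, hs₀⟩ : ∃ s₀, M * Real.exp (-1) < f s₀ := by
    refine exists_lt_of_lt_ciSup ?_
    have : Real.exp (-1) < 1 := Real.exp_lt_one_iff.2 (by norm_num)
    nlinarith
  have hdecay := logConcave_le_exp_neg h0 hlc hM hm hfM hs₀.le hfm
  obtain ⟨τ, hτ⟩ : ∃ τ, τ = 21 * m / M := ⟨_, rfl⟩
  rw [← hτ] at hdecay
  have hτ0 : 0 < τ := by rw [hτ]; positivity
  have hMτ : M * τ = 21 * m := by rw [hτ]; field_simp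
  obtain ⟨w, hw⟩ : ∃ w : ℝ → ℝ, w = fun x => |x - s₀| / τ := ⟨_, rfl⟩
  have hwm : Measurable w := by rw [hw]; fun_prop
  have hw0 : ∀ x, 0 ≤ w x := fun x => by rw [hw]; positivity
  set E := {x | |q.eval x| ≤ c} with hEdef
  have hEm : MeasurableSet E := measurableSet_le (by fun_prop) measurable_const
  rw [← withDensity_apply _ hEm] at hE
  obtain ⟨j, hj⟩ := exists_shell_of_le_measure (w := w) (show 0 < b * m by positivity) hE
  set S := E ∩ {x | ⌊w x⌋₊ = j} with hS
  have hSm : MeasurableSet S := hEm.inter ((Nat.measurable_floor.comp hwm) (measurableSet_singleton j))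
  have hwS : ∀ x ∈ S, (j : ℝ) ≤ w x ∧ w x < j + 1 := fun x hx =>
    (Nat.floor_eq_iff (hw0 x)).1 hx.2
  rw [withDensity_apply _ hSm] at hj
  have hvol : ENNReal.ofReal (b * m / 2 ^ (j + 2)) <
      ENNReal.ofReal (M * Real.exp (2 - 2 * j)) * volume S := by
    refine hj.trans_le ?_
    rw [← setLIntegral_const]
    refine setLIntegral_mono' hSm fun x hx => ENNReal.ofReal_le_ofReal ((hdecay x).trans ?_)
    have h1 := (hwS x hx).1
    have : (j : ℝ) ≤ |x - s₀| / τ := by rwa [hw] at h1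
    gcongr
  set A := b * τ * (j + 1) / 672 with hA
  have hA0 : 0 < A := by positivity
  have hAvol : ENNReal.ofReal A < volume S := by
    by_contra hcon
    rw [not_lt] at hcon
    have h1 := hvol.trans_le (mul_le_mul_right hcon _)
    rw [← ENNReal.ofReal_mul (by positivity)] at h1
    have h2 := (ENNReal.ofReal_lt_ofReal_iff (by positivity)).1 h1
    have h3 : M * Real.exp (2 - 2 * j) * A ≤ b * m * (j + 1) / (4 * 4 ^ j) := by
      have e1 : Real.exp (2 - 2 * j) = Real.exp 2 / Real.exp 2 ^ j := by
        rw [Real.exp_sub, ← Real.exp_nat_mul]; congr 2; ring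
      have e2 : Real.exp 2 / Real.exp 2 ^ j ≤ 8 / 4 ^ j := by
        gcongr
        · exact exp_two_le
        · exact four_le_exp_two
      rw [e1, hA]
      calc M * (Real.exp 2 / Real.exp 2 ^ j) * (b * τ * (j + 1) / 672)
          = (M * τ) * (b * (j + 1) / 672) * (Real.exp 2 / Real.exp 2 ^ j) := by ring
        _ ≤ (M * τ) * (b * (j + 1) / 672) * (8 / 4 ^ j) := by gcongr
        _ = b * m * (j + 1) / (4 * 4 ^ j) := by rw [hMτ]; field_simp; norm_num
    have h4 : ((j : ℝ) + 1) ≤ 2 ^ j := by exact_mod_cast Nat.lt_two_pow_self (n := j)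
    have h5 : b * m * (j + 1) / (4 * 4 ^ j) ≤ b * m / 2 ^ (j + 2) := by
      have : (4 : ℝ) ^ j = 2 ^ j * 2 ^ j := by rw [← mul_pow]; norm_num
      rw [this, pow_add, div_le_div_iff₀ (by positivity) (by positivity)]
      have hbm : 0 < b * m := by positivity
      have h2j : (0 : ℝ) < 2 ^ j := by positivity
      nlinarith [mul_le_mul_of_nonneg_left h4 (mul_pos hbm h2j).le]
    linarith
  have hd0 : (0 : ℝ) < d := by exact_mod_cast hd
  have hδ : 0 < A / d := by positivity
  have hSb : BddBelow S := by
    refine ⟨s₀ - τ * (j + 1), fun x hx => ?_⟩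
    have h1 := (hwS x hx).2
    rw [hw, div_lt_iff₀ hτ0] at h1
    have := neg_abs_le (x - s₀)
    nlinarith
  obtain ⟨p, hp, hp'⟩ := exists_separated_of_lt_volume hδ.le d hSb (by
    rwa [mul_div_cancel₀ _ hd0.ne'])
  have hbound : ∀ x, |q.eval x| ≤ c * ((2688 * d / b) ^ d * Real.exp (1 + w x)) := by
    intro x
    have h1 := abs_eval_le_of_separated (t := x) hq hδ hc hp' (fun i hi => (hp i hi).1)
      (R := τ * (w x + (j + 1))) (fun i hi => by
        have h1 := (hwS _ (hp i hi)).2.le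
        rw [hw, div_le_iff₀ hτ0] at h1
        have h2 : τ * w x = |x - s₀| := by rw [hw]; field_simp
        have h3 := abs_sub_le x s₀ (p i)
        rw [abs_sub_comm s₀] at h3
        linarith)
    refine h1.trans (mul_le_mul_of_nonneg_left ?_ hc)
    have h2 : 2 * (τ * (w x + (j + 1))) / (A / d) ≤ (2688 * d / b) * (1 + w x) := by
      rw [hA, div_div_eq_mul_div, div_div_eq_mul_div, div_mul_eq_mul_div (2688 * (d : ℝ)) b,
        div_le_div_iff₀ (by positivity) hb]
      have hj0 : (0 : ℝ) ≤ j := by positivity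
      have : w x + (j + 1) ≤ (1 + w x) * (j + 1) := by nlinarith [hw0 x]
      have hpos : 0 ≤ τ * d * b := by positivity
      have hpos2 : 0 ≤ (1 + w x) * (j + 1) := by have := hw0 x; positivity
      nlinarith [mul_le_mul_of_nonneg_left this hpos, mul_nonneg hpos hpos2]
    have hwx := hw0 x
    calc _ ≤ ((2688 * d / b) * (1 + w x)) ^ d / d.factorial := by gcongr
      _ = (2688 * d / b) ^ d * ((1 + w x) ^ d / d.factorial) := by rw [mul_pow]; ring
      _ ≤ _ := by
        gcongr
        exact Real.pow_div_factorial_le_exp _ (by positivity) d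
  have hpt : ∀ x, |q.eval x| * f x ≤
      (c * (2688 * d / b) ^ d * (M * Real.exp 3)) * Real.exp (-(|x - s₀| / τ)) := by
    intro x
    calc _ ≤ (c * ((2688 * d / b) ^ d * Real.exp (1 + w x))) * (M * Real.exp (2 - 2 * w x)) := by
          have h1 := hdecay x
          rw [show |x - s₀| / τ = w x by rw [hw]] at h1
          exact mul_le_mul (hbound x) h1 (h0 x) (by positivity)
      _ = (c * (2688 * d / b) ^ d * M) * Real.exp ((1 + w x) + (2 - 2 * w x)) := by
          rw [Real.exp_add (1 + w x)]; ring
      _ = _ := by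
          rw [show (1 + w x) + (2 - 2 * w x) = 3 + -(|x - s₀| / τ) by rw [hw]; ring,
            Real.exp_add]
          ring
  calc _ ≤ ∫⁻ x, ENNReal.ofReal (c * (2688 * d / b) ^ d * (M * Real.exp 3)) *
          ENNReal.ofReal (Real.exp (-(|x - s₀| / τ))) := by
        refine lintegral_mono fun x => ?_
        rw [← ENNReal.ofReal_mul (by positivity)]
        exact ENNReal.ofReal_le_ofReal (hpt x)
    _ ≤ ENNReal.ofReal (c * (2688 * d / b) ^ d * (M * Real.exp 3)) * ENNReal.ofReal (2 * τ) := by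
        rw [lintegral_const_mul _ (by fun_prop)]
        gcongr
        exact lintegral_exp_neg_abs_le hτ0 s₀
    _ ≤ _ := by
        rw [← ENNReal.ofReal_mul (by positivity)]
        refine ENNReal.ofReal_le_ofReal ?_
        have h1 : M * Real.exp 3 * (2 * τ) ≤ 882 * m := by
          have := exp_three_lt
          calc _ = 2 * Real.exp 3 * (M * τ) := by ring
            _ ≤ 2 * 21 * (M * τ) := by gcongr
            _ = 882 * m := by rw [hMτ]; ring
        have h2 : (882 : ℝ) ≤ 882 ^ d := le_self_pow₀ (by norm_num) (by omega)
        calc _ = c * (2688 * d / b) ^ d * (M * Real.exp 3 * (2 * τ)) := by ring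
          _ ≤ c * (2688 * d / b) ^ d * (882 ^ d * m) := by
              refine mul_le_mul_of_nonneg_left (h1.trans ?_) (by positivity)
              gcongr
          _ = c * (882 * (2688 * d / b)) ^ d * m := by rw [mul_pow]; ring
          _ = _ := by congr 3; ring

theorem gaussianN_eq_zero_of_sections {n : ℕ} (i : Fin (n + 1)) {S : Set (Fin (n + 1) → ℝ)}
    (hS : MeasurableSet S) (h : ∀ y : Fin n → ℝ, {t : ℝ | i.insertNth t y ∈ S}.Subsingleton) :
    gaussianN (n + 1) S = 0 := by
  rw [← (measurePreserving_insertNth_gaussianN i).measure_preimage hS.nullMeasurableSet,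
    Measure.prod_apply_symm (measurable_insertNth_pair i hS), lintegral_eq_zero_of_ae_eq_zero]
  refine ae_of_all _ fun y => ?_
  have := nullSingletonClass_gaussianReal (μ := 0) (v := 1) one_ne_zero
  exact (h y).measure_zero _

/-- An affine form in the coordinates `i, j`, vanishing at `(r, s)`, with direction `θ`. -/
noncomputable def planarForm {n : ℕ} (i j : Fin n) (r s θ : ℝ) (x : Fin n → ℝ) : ℝ :=
  Real.cos θ * (x i - r) + Real.sin θ * (x j - s)

theorem continuous_planarForm {n : ℕ} (i j : Fin n) (r s θ : ℝ) :
    Continuous (planarForm i j r s θ) := by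
  unfold planarForm; fun_prop

theorem planarForm_add_pi {n : ℕ} (i j : Fin n) (r s θ : ℝ) (x : Fin n → ℝ) :
    planarForm i j r s (θ + Real.pi) x = -planarForm i j r s θ x := by
  simp [planarForm]; ring

theorem gaussianN_planarForm_eq_zero {n : ℕ} {i j : Fin (n + 1)} (hij : i ≠ j) (r s θ : ℝ) :
    gaussianN (n + 1) {x | planarForm i j r s θ x = 0} = 0 := by
  have hm : MeasurableSet {x | planarForm i j r s θ x = 0} :=
    (isClosed_eq (continuous_planarForm i j r s θ) continuous_const).measurableSet
  by_cases hc : Real.cos θ = 0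
  · have hs : Real.sin θ ≠ 0 := by
      intro hs
      have := Real.sin_sq_add_cos_sq θ
      rw [hc, hs] at this
      norm_num at this
    refine gaussianN_eq_zero_of_sections j hm fun y t ht u hu => ?_
    obtain ⟨k, hk⟩ := Fin.exists_succAbove_eq hij
    simp only [Set.mem_ofPred_eq, planarForm, ← hk, Fin.insertNth_apply_same,
      Fin.insertNth_apply_succAbove] at ht hu
    have : Real.sin θ * (t - u) = 0 := by linarith
    rcases mul_eq_zero.1 this with h | h
    · exact absurd h hs
    · linarith
  · refine gaussianN_eq_zero_of_sections i hm fun y t ht u hu => ?_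
    obtain ⟨k, hk⟩ := Fin.exists_succAbove_eq hij.symm
    simp only [Set.mem_ofPred_eq, planarForm, ← hk, Fin.insertNth_apply_same,
      Fin.insertNth_apply_succAbove] at ht hu
    have : Real.cos θ * (t - u) = 0 := by linarith
    rcases mul_eq_zero.1 this with h | h
    · exact absurd h hc
    · linarith

theorem continuous_setIntegral_planarForm {n : ℕ} {i j : Fin (n + 1)} (hij : i ≠ j) (r s : ℝ)
    {u : (Fin (n + 1) → ℝ) → ℝ} {K : Set (Fin (n + 1) → ℝ)}
    (hu : IntegrableOn u K (gaussianN (n + 1))) :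
    Continuous fun θ => ∫ x in K ∩ {x | 0 ≤ planarForm i j r s θ x}, u x ∂(gaussianN (n + 1)) := by
  have hm : ∀ θ, MeasurableSet {x | 0 ≤ planarForm i j r s θ x} := fun θ =>
    (isClosed_le continuous_const (continuous_planarForm i j r s θ)).measurableSet
  have e : ∀ θ, ∫ x in K ∩ {x | 0 ≤ planarForm i j r s θ x}, u x ∂(gaussianN (n + 1)) =
      ∫ x in K, {x | 0 ≤ planarForm i j r s θ x}.indicator u x ∂(gaussianN (n + 1)) := by
    intro θ
    rw [setIntegral_indicator (hm θ)]
  simp_rw [e]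
  refine continuous_iff_continuousAt.2 fun θ₀ => ?_
  refine continuousAt_of_dominated (bound := fun x => ‖u x‖) ?_ ?_ hu.norm ?_
  · exact Filter.Eventually.of_forall fun θ => hu.aestronglyMeasurable.indicator (hm θ)
  · exact Filter.Eventually.of_forall fun θ => ae_of_all _ fun x => norm_indicator_le_norm_self _ _
  · have hnull : ∀ᵐ x ∂((gaussianN (n + 1)).restrict K), planarForm i j r s θ₀ x ≠ 0 := by
      refine ae_restrict_of_ae ?_
      rw [ae_iff]
      simpa using gaussianN_planarForm_eq_zero hij r s θ₀
    filter_upwards [hnull] with x hx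
    have hc : Continuous fun θ => planarForm i j r s θ x := by unfold planarForm; fun_prop
    rcases lt_or_gt_of_ne hx with h | h
    · have : (fun θ => {x | 0 ≤ planarForm i j r s θ x}.indicator u x) =ᶠ[nhds θ₀]
          fun _ => (0 : ℝ) := by
        filter_upwards [hc.continuousAt.eventually_lt continuousAt_const h] with θ hθ
        exact Set.indicator_of_notMem
          (show x ∉ {x | 0 ≤ planarForm i j r s θ x} from not_le.2 hθ) _
      exact (continuousAt_const (y := (0 : ℝ))).congr this.symm
    · have : (fun θ => {x | 0 ≤ planarForm i j r s θ x}.indicator u x) =ᶠ[nhds θ₀]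
          fun _ => u x := by
        filter_upwards [(continuousAt_const (y := (0 : ℝ))).eventually_lt hc.continuousAt h] with θ hθ
        exact Set.indicator_of_mem
          (show x ∈ {x | 0 ≤ planarForm i j r s θ x} from hθ.le) _
      exact continuousAt_const.congr this.symm

theorem setIntegral_planarForm_add_pi {n : ℕ} {i j : Fin (n + 1)} (hij : i ≠ j) (r s θ : ℝ)
    {u : (Fin (n + 1) → ℝ) → ℝ} {K : Set (Fin (n + 1) → ℝ)}
    (hu : IntegrableOn u K (gaussianN (n + 1))) :
    (∫ x in K ∩ {x | 0 ≤ planarForm i j r s θ x}, u x ∂(gaussianN (n + 1))) +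
      ∫ x in K ∩ {x | 0 ≤ planarForm i j r s (θ + Real.pi) x}, u x ∂(gaussianN (n + 1)) =
      ∫ x in K, u x ∂(gaussianN (n + 1)) := by
  have hm : MeasurableSet {x | 0 ≤ planarForm i j r s θ x} :=
    (isClosed_le continuous_const (continuous_planarForm i j r s θ)).measurableSet
  rw [← integral_inter_add_sdiff hm hu]
  congr 1
  refine setIntegral_congr_set ?_
  have hnull : ∀ᵐ x ∂(gaussianN (n + 1)), planarForm i j r s θ x ≠ 0 := by
    rw [ae_iff]
    simpa using gaussianN_planarForm_eq_zero hij r s θ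
  filter_upwards [hnull] with x hx
  refine propext (and_congr_right fun _ => ?_)
  change 0 ≤ planarForm i j r s (θ + Real.pi) x ↔ ¬ 0 ≤ planarForm i j r s θ x
  rw [planarForm_add_pi, not_le]
  exact ⟨fun h => lt_of_le_of_ne (by linarith) hx, fun h => by linarith⟩

/-- Bisection step of localization. -/
theorem exists_planarForm_bisection {n : ℕ} {i j : Fin (n + 1)} (hij : i ≠ j) (r s : ℝ)
    {u v : (Fin (n + 1) → ℝ) → ℝ} {K : Set (Fin (n + 1) → ℝ)}
    (hu : IntegrableOn u K (gaussianN (n + 1))) (hv : IntegrableOn v K (gaussianN (n + 1)))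
    (hu0 : 0 ≤ ∫ x in K, u x ∂(gaussianN (n + 1))) (hv0 : 0 < ∫ x in K, v x ∂(gaussianN (n + 1))) :
    ∃ θ, 0 ≤ ∫ x in K ∩ {x | 0 ≤ planarForm i j r s θ x}, u x ∂(gaussianN (n + 1)) ∧
      0 < ∫ x in K ∩ {x | 0 ≤ planarForm i j r s θ x}, v x ∂(gaussianN (n + 1)) := by
  set U : ℝ → ℝ := fun θ =>
    ∫ x in K ∩ {x | 0 ≤ planarForm i j r s θ x}, u x ∂(gaussianN (n + 1)) with hU
  have hUc : Continuous U := continuous_setIntegral_planarForm hij r s hu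
  have hUpi : ∀ θ, U θ + U (θ + Real.pi) = ∫ x in K, u x ∂(gaussianN (n + 1)) := fun θ =>
    setIntegral_planarForm_add_pi hij r s θ hu
  have hD : Continuous fun θ => U θ - U (θ + Real.pi) := by fun_prop
  have hz : ∃ θ, U θ - U (θ + Real.pi) = 0 := by
    have h0 := hUpi 0
    have h1 := hUpi (0 + Real.pi)
    have hDpi : U (0 + Real.pi) - U (0 + Real.pi + Real.pi) = -(U 0 - U (0 + Real.pi)) := by linarith
    rcases le_total 0 (U 0 - U (0 + Real.pi)) with h | h
    · exact mem_range_of_exists_le_of_exists_ge hD ⟨0 + Real.pi, by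
        change U _ - U _ ≤ 0; linarith⟩ ⟨0, h⟩
    · exact mem_range_of_exists_le_of_exists_ge hD ⟨0, h⟩ ⟨0 + Real.pi, by
        change 0 ≤ U _ - U _; linarith⟩
  obtain ⟨θ, hθ⟩ := hz
  have h1 := hUpi θ
  have h2 := setIntegral_planarForm_add_pi hij r s θ hv
  rcases lt_or_ge 0 (∫ x in K ∩ {x | 0 ≤ planarForm i j r s θ x}, v x ∂(gaussianN (n + 1)))
    with h | h
  · exact ⟨θ, by change 0 ≤ U θ; linarith, h⟩
  · exact ⟨θ + Real.pi, by change 0 ≤ U (θ + Real.pi); linarith, by linarith⟩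

theorem det_eq_zero_of_planarForm_nonneg {n : ℕ} {i j : Fin n} {T : Set (Fin n → ℝ)}
    (h : ∀ r s : ℚ, ∃ θ, ∀ x ∈ T, 0 ≤ planarForm i j r s θ x) {a b c : Fin n → ℝ}
    (ha : a ∈ T) (hb : b ∈ T) (hc : c ∈ T) :
    (b i - a i) * (c j - a j) - (b j - a j) * (c i - a i) = 0 := by
  by_contra hdet
  set D := (b i - a i) * (c j - a j) - (b j - a j) * (c i - a i) with hD
  set β : ℝ × ℝ → ℝ := fun p => ((p.1 - a i) * (c j - a j) - (p.2 - a j) * (c i - a i)) / D with hβ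
  set γ : ℝ × ℝ → ℝ := fun p => ((b i - a i) * (p.2 - a j) - (b j - a j) * (p.1 - a i)) / D with hγ
  have hβc : Continuous β := by fun_prop
  have hγc : Continuous γ := by fun_prop
  have hopen : IsOpen {p : ℝ × ℝ | 0 < β p ∧ 0 < γ p ∧ β p + γ p < 1} :=
    (isOpen_lt continuous_const hβc).inter
      ((isOpen_lt continuous_const hγc).inter (isOpen_lt (hβc.add hγc) continuous_const))
  have hne : {p : ℝ × ℝ | 0 < β p ∧ 0 < γ p ∧ β p + γ p < 1}.Nonempty := by
    refine ⟨((a i + b i + c i) / 3, (a j + b j + c j) / 3), ?_⟩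
    have h1 : β ((a i + b i + c i) / 3, (a j + b j + c j) / 3) = 1 / 3 := by
      rw [hβ]; simp only; rw [div_eq_div_iff hdet (by norm_num), hD]; ring
    have h2 : γ ((a i + b i + c i) / 3, (a j + b j + c j) / 3) = 1 / 3 := by
      rw [hγ]; simp only; rw [div_eq_div_iff hdet (by norm_num), hD]; ring
    simp only [Set.mem_ofPred_eq, h1, h2]
    norm_num
  have hdense : DenseRange (Prod.map ((↑) : ℚ → ℝ) ((↑) : ℚ → ℝ)) :=
    Rat.denseRange_cast.prodMap Rat.denseRange_cast
  obtain ⟨⟨r, s⟩, h1, h2, h3⟩ := hdense.exists_mem_open hopen hne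
  simp only [Prod.map_apply] at h1 h2 h3
  obtain ⟨θ, hθ⟩ := h r s
  have ea := hθ a ha
  have eb := hθ b hb
  have ec := hθ c hc
  set B := β ((r : ℝ), (s : ℝ)) with hB
  set G := γ ((r : ℝ), (s : ℝ)) with hG
  have hx : (r : ℝ) - a i = B * (b i - a i) + G * (c i - a i) := by
    rw [hB, hG, hβ, hγ]; simp only; field_simp; rw [hD]; ring
  have hy : (s : ℝ) - a j = B * (b j - a j) + G * (c j - a j) := by
    rw [hB, hG, hβ, hγ]; simp only; field_simp; rw [hD]; ring
  have hcomb : (1 - B - G) * planarForm i j r s θ a + B * planarForm i j r s θ b +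
      G * planarForm i j r s θ c = 0 := by
    unfold planarForm
    linear_combination (-Real.cos θ) * hx + (-Real.sin θ) * hy
  have hpos : 0 < 1 - B - G := by linarith
  have na := mul_nonneg hpos.le ea
  have nb := mul_nonneg h1.le eb
  have nc := mul_nonneg h2.le ec
  have za : planarForm i j r s θ a = 0 := by
    rcases mul_eq_zero.1 (show (1 - B - G) * planarForm i j r s θ a = 0 by linarith) with h | h
    · linarith
    · exact h
  have zb : planarForm i j r s θ b = 0 := by
    rcases mul_eq_zero.1 (show B * planarForm i j r s θ b = 0 by linarith) with h | h
    · linarith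
    · exact h
  have zc : planarForm i j r s θ c = 0 := by
    rcases mul_eq_zero.1 (show G * planarForm i j r s θ c = 0 by linarith) with h | h
    · linarith
    · exact h
  unfold planarForm at za zb zc
  have hcos : Real.cos θ * D = 0 := by
    rw [hD]; linear_combination (c j - a j) * (zb - za) - (b j - a j) * (zc - za)
  have hsin : Real.sin θ * D = 0 := by
    rw [hD]; linear_combination (b i - a i) * (zc - za) - (c i - a i) * (zb - za)
  have hc0 := (mul_eq_zero.1 hcos).resolve_right hdet
  have hs0 := (mul_eq_zero.1 hsin).resolve_right hdet
  have := Real.sin_sq_add_cos_sq θ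
  rw [hc0, hs0] at this
  norm_num at this

theorem exists_line_of_planarForm_nonneg {n : ℕ} {T : Set (Fin (n + 1) → ℝ)}
    (h : ∀ i j : Fin (n + 1), i ≠ j → ∀ r s : ℚ, ∃ θ, ∀ x ∈ T, 0 ≤ planarForm i j r s θ x) :
    ∃ (k : Fin (n + 1)) (p w : Fin (n + 1) → ℝ), ∀ x ∈ T, x = p + (x k - p k) • w := by
  by_cases hT : T.Subsingleton
  · rcases T.eq_empty_or_nonempty with rfl | ⟨p, hp⟩
    · exact ⟨0, 0, 0, by simp⟩
    · exact ⟨0, p, 0, fun x hx => by rw [hT hx hp]; simp⟩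
  · rw [Set.not_subsingleton_iff] at hT
    obtain ⟨a, ha, b, hb, hab⟩ := hT
    obtain ⟨k, hk⟩ := Function.ne_iff.1 hab
    have hk' : b k - a k ≠ 0 := sub_ne_zero.2 (Ne.symm hk)
    refine ⟨k, a, (b k - a k)⁻¹ • (b - a), fun x hx => ?_⟩
    ext j
    simp only [Pi.add_apply, Pi.smul_apply, Pi.sub_apply, smul_eq_mul]
    by_cases hkj : k = j
    · subst hkj
      field_simp
      ring
    · have := det_eq_zero_of_planarForm_nonneg (h k j hkj) ha hb hx
      field_simp
      linear_combination this

/-- Localization: integral inequalities over a convex body persist on a convex body close to a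
line. -/
theorem exists_convex_near_line {n : ℕ} {u v F : (Fin (n + 1) → ℝ) → ℝ}
    {K₀ : Set (Fin (n + 1) → ℝ)} (hK₀ : IsCompact K₀) (hK₀c : Convex ℝ K₀)
    (hu : IntegrableOn u K₀ (gaussianN (n + 1))) (hv : IntegrableOn v K₀ (gaussianN (n + 1)))
    (hu0 : 0 ≤ ∫ x in K₀, u x ∂(gaussianN (n + 1)))
    (hv0 : 0 < ∫ x in K₀, v x ∂(gaussianN (n + 1)))
    (hF : Continuous F) {η : ℝ} (hη : 0 < η) :
    ∃ K ⊆ K₀, IsCompact K ∧ Convex ℝ K ∧ 0 ≤ ∫ x in K, u x ∂(gaussianN (n + 1)) ∧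
      0 < ∫ x in K, v x ∂(gaussianN (n + 1)) ∧
      ∃ (k : Fin (n + 1)) (p w : Fin (n + 1) → ℝ), ∀ x ∈ K, |F x - F (p + (x k - p k) • w)| < η := by
  let Good : Set (Fin (n + 1) → ℝ) → Prop := fun K => K ⊆ K₀ ∧ IsCompact K ∧ Convex ℝ K ∧
    0 ≤ ∫ x in K, u x ∂(gaussianN (n + 1)) ∧ 0 < ∫ x in K, v x ∂(gaussianN (n + 1))
  have step : ∀ (K : {K // Good K}) (q : Fin (n + 1) × Fin (n + 1) × ℚ × ℚ), ∃ K' : {K // Good K},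
      K'.1 ⊆ K.1 ∧ (q.1 ≠ q.2.1 →
        ∃ θ, ∀ x ∈ K'.1, 0 ≤ planarForm q.1 q.2.1 q.2.2.1 q.2.2.2 θ x) := by
    rintro ⟨K, hK, hKcpt, hKc, hKu, hKv⟩ ⟨i, j, r, s⟩
    by_cases hij : i = j
    · exact ⟨⟨K, hK, hKcpt, hKc, hKu, hKv⟩, subset_rfl, fun h => absurd hij h⟩
    obtain ⟨θ, h1, h2⟩ := exists_planarForm_bisection hij r s (hu.mono_set hK) (hv.mono_set hK) hKu hKv
    refine ⟨⟨K ∩ {x | 0 ≤ planarForm i j r s θ x}, Set.inter_subset_left.trans hK,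
      hKcpt.inter_right (isClosed_le continuous_const (continuous_planarForm i j r s θ)),
      hKc.inter ?_, h1, h2⟩, Set.inter_subset_left, fun _ => ⟨θ, fun x hx => hx.2⟩⟩
    intro x hx y hy a b ha hb hab
    simp only [Set.mem_ofPred_eq] at hx hy ⊢
    have : planarForm i j r s θ (a • x + b • y) =
        a * planarForm i j r s θ x + b * planarForm i j r s θ y := by
      simp only [planarForm, Pi.add_apply, Pi.smul_apply, smul_eq_mul]
      linear_combination (Real.cos θ * r + Real.sin θ * s) * hab
    rw [this]
    positivity
  choose next hnext hform using step
  obtain ⟨e, he⟩ := exists_surjective_nat (Fin (n + 1) × Fin (n + 1) × ℚ × ℚ)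
  let seq : ℕ → {K // Good K} := fun m =>
    Nat.rec ⟨K₀, subset_rfl, hK₀, hK₀c, hu0, hv0⟩ (fun m K => next K (e m)) m
  have hseq : ∀ m, seq (m + 1) = next (seq m) (e m) := fun m => rfl
  have hanti : Antitone fun m => (seq m).1 :=
    antitone_nat_of_succ_le fun m => by rw [hseq]; exact hnext _ _
  obtain ⟨k, p, w, hline⟩ := exists_line_of_planarForm_nonneg (T := ⋂ m, (seq m).1) (by
    intro i j hij r s
    obtain ⟨m, hm⟩ := he (i, j, r, s)
    have := hform (seq m) (e m)
    rw [← hseq, hm] at this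
    obtain ⟨θ, hθ⟩ := this hij
    exact ⟨θ, fun x hx => hθ x (Set.mem_iInter.1 hx (m + 1))⟩)
  have hopen : IsOpen {x : Fin (n + 1) → ℝ | |F x - F (p + (x k - p k) • w)| < η} :=
    isOpen_lt (by fun_prop) continuous_const
  obtain ⟨m, hm⟩ := exists_subset_nhds_of_isCompact (V := fun m => (seq m).1) hanti.directed_ge
    (fun m => (seq m).2.2.1) (U := {x | |F x - F (p + (x k - p k) • w)| < η}) (by
      intro x hx
      refine hopen.mem_nhds ?_
      have := hline x hx
      simp only [Set.mem_ofPred_eq]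
      rw [← this, sub_self, abs_zero]
      exact hη)
  obtain ⟨h1, h2, h3, h4, h5⟩ := (seq m).2
  exact ⟨(seq m).1, h1, h2, h3, h4, h5, k, p, w, fun x hx => hm hx⟩

theorem setIntegral_le_of_near_line {n : ℕ} {F : (Fin (n + 1) → ℝ) → ℝ} (hF : Continuous F)
    (hF0 : ∀ x, 0 ≤ F x) {d : ℕ} (hd : 1 ≤ d)
    (hline : ∀ a b : Fin (n + 1) → ℝ, ∃ q : Polynomial ℝ, q.natDegree ≤ d ∧
      ∀ s : ℝ, F (a + s • b) = q.eval s)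
    {K : Set (Fin (n + 1) → ℝ)} (hK : IsCompact K) (hKc : Convex ℝ K)
    (hK0 : 0 < (gaussianN (n + 1)).real K) {η : ℝ} {k : Fin (n + 1)}
    {p w : Fin (n + 1) → ℝ} (hnear : ∀ x ∈ K, |F x - F (p + (x k - p k) • w)| < η)
    {b c : ℝ} (hη : 0 < η) (hb : 0 < b) (hc : 0 ≤ c)
    (hE : b * (gaussianN (n + 1)).real K ≤ (gaussianN (n + 1)).real (K ∩ {x | F x ≤ c})) :
    ∫ x in K, F x ∂(gaussianN (n + 1)) ≤
      ((c + η) * (2370816 * d / b) ^ d + η) * (gaussianN (n + 1)).real K := by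
  obtain ⟨q, hq, hqF⟩ := hline (p - p k • w) w
  have hFq : ∀ x : Fin (n + 1) → ℝ, F (p + (x k - p k) • w) = q.eval (x k) := by
    intro x
    rw [← hqF]
    congr 1
    module
  simp only [hFq] at hnear
  have hq0 : ∀ s, 0 ≤ q.eval s := fun s => by rw [← hqF]; exact hF0 _
  have hKm := hK.measurableSet
  set f : ℝ → ℝ := fun t => (gaussianMarginal k K t).toReal with hf
  have hof : ∀ t, ENNReal.ofReal (f t) = gaussianMarginal k K t := fun t =>
    ENNReal.ofReal_toReal ((gaussianMarginal_le_one k K t).trans_lt ENNReal.one_lt_top).ne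
  have hmass : ∫⁻ t, ENNReal.ofReal (f t) = ENNReal.ofReal ((gaussianN (n + 1)).real K) := by
    simp only [hof]
    have := lintegral_gaussianMarginal k hKm (u := fun _ => 1) measurable_const
    simp only [mul_one, setLIntegral_const, one_mul] at this
    rw [this, ofReal_measureReal]
  have hqm : Measurable fun t => q.eval t := by fun_prop
  have key := lintegral_abs_eval_le_of_logConcave (f := f) (fun _ => ENNReal.toReal_nonneg)
    (fun s hs0 hs1 x y => by
      simp only [hf]
      rw [ENNReal.toReal_rpow, ENNReal.toReal_rpow, ← ENNReal.toReal_mul]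
      exact ENNReal.toReal_mono ((gaussianMarginal_le_one k K _).trans_lt ENNReal.one_lt_top).ne
        (gaussianMarginal_logConcave k hKm hKc hs0 hs1 x y))
    (B := 1) (fun x => ENNReal.toReal_le_of_le_ofReal zero_le_one
      (by simpa using gaussianMarginal_le_one k K x)) hK0 hmass hd hq
    (add_nonneg hc hη.le) hb (by
      simp only [hof]
      have hms : MeasurableSet {t : ℝ | |q.eval t| ≤ c + η} :=
        measurableSet_le hqm.abs measurable_const
      have h1 := lintegral_gaussianMarginal k hKm
        (u := {t : ℝ | |q.eval t| ≤ c + η}.indicator 1) (measurable_one.indicator hms)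
      rw [← lintegral_indicator hms]
      calc ENNReal.ofReal (b * (gaussianN (n + 1)).real K)
          ≤ ENNReal.ofReal ((gaussianN (n + 1)).real (K ∩ {x | F x ≤ c})) :=
            ENNReal.ofReal_le_ofReal hE
        _ = gaussianN (n + 1) (K ∩ {x | F x ≤ c}) := ofReal_measureReal
        _ ≤ (gaussianN (n + 1)).restrict K {x | |q.eval (x k)| ≤ c + η} := by
            rw [Measure.restrict_apply (measurableSet_le (by fun_prop) measurable_const)]
            refine measure_mono fun x hx => ⟨?_, hx.1⟩
            have h2 := (abs_lt.1 (hnear x hx.1)).1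
            have h3 : F x ≤ c := hx.2
            simp only [Set.mem_ofPred_eq]
            rw [abs_of_nonneg (hq0 _)]
            linarith
        _ = ∫⁻ x in K, {t : ℝ | |q.eval t| ≤ c + η}.indicator 1 (x k) ∂(gaussianN (n + 1)) := by
            rw [← lintegral_indicator_one (measurableSet_le (by fun_prop) measurable_const)]
            rfl
        _ = ∫⁻ t, gaussianMarginal k K t * {t : ℝ | |q.eval t| ≤ c + η}.indicator 1 t := h1.symm
        _ ≤ _ := by
            refine lintegral_mono fun t => ?_
            by_cases ht : t ∈ {t : ℝ | |q.eval t| ≤ c + η} <;> simp [ht])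
  have h4 : ∫⁻ x in K, ENNReal.ofReal |q.eval (x k)| ∂(gaussianN (n + 1)) ≤
      ENNReal.ofReal ((c + η) * (2370816 * d / b) ^ d * (gaussianN (n + 1)).real K) := by
    refine le_trans (le_of_eq ?_) key
    rw [← lintegral_gaussianMarginal k hKm (u := fun t => ENNReal.ofReal |q.eval t|) (by fun_prop)]
    refine lintegral_congr fun t => ?_
    rw [ENNReal.ofReal_mul (abs_nonneg _), hof, mul_comm]
  have hA : 0 ≤ (c + η) * (2370816 * d / b) ^ d := by positivity
  rw [integral_eq_lintegral_of_nonneg_ae (ae_of_all _ hF0) hF.aestronglyMeasurable]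
  refine ENNReal.toReal_le_of_le_ofReal (by positivity) ?_
  rw [add_mul, ENNReal.ofReal_add (by positivity) (by positivity)]
  calc ∫⁻ x in K, ENNReal.ofReal (F x) ∂(gaussianN (n + 1))
      ≤ ∫⁻ x in K, (ENNReal.ofReal |q.eval (x k)| + ENNReal.ofReal η) ∂(gaussianN (n + 1)) := by
        refine setLIntegral_mono (by fun_prop) fun x hx => ?_
        rw [← ENNReal.ofReal_add (abs_nonneg _) hη.le]
        refine ENNReal.ofReal_le_ofReal ?_
        have h2 := (abs_lt.1 (hnear x hx)).2
        have := le_abs_self (q.eval (x k))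
        linarith
    _ = (∫⁻ x in K, ENNReal.ofReal |q.eval (x k)| ∂(gaussianN (n + 1))) +
          ENNReal.ofReal (η * (gaussianN (n + 1)).real K) := by
        rw [lintegral_add_right _ measurable_const, setLIntegral_const, ENNReal.ofReal_mul hη.le,
          ofReal_measureReal]
    _ ≤ _ := by gcongr

theorem setIntegral_le_of_measure_le {n : ℕ} {F : (Fin (n + 1) → ℝ) → ℝ} (hF : Continuous F)
    (hF0 : ∀ x, 0 ≤ F x) {d : ℕ} (hd : 1 ≤ d)
    (hline : ∀ a b : Fin (n + 1) → ℝ, ∃ q : Polynomial ℝ, q.natDegree ≤ d ∧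
      ∀ s : ℝ, F (a + s • b) = q.eval s)
    {K : Set (Fin (n + 1) → ℝ)} (hK : IsCompact K) (hKc : Convex ℝ K)
    (hK0 : 0 < (gaussianN (n + 1)).real K) {b c : ℝ} (hb : 0 < b) (hc : 0 ≤ c)
    (hE : b * (gaussianN (n + 1)).real K ≤ (gaussianN (n + 1)).real (K ∩ {x | F x ≤ c})) :
    ∫ x in K, F x ∂(gaussianN (n + 1)) ≤
      c * (2370816 * d / b) ^ d * (gaussianN (n + 1)).real K := by
  by_contra! hcon
  set m := (gaussianN (n + 1)).real K with hm
  set a := (∫ x in K, F x ∂(gaussianN (n + 1))) / m with ha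
  have haA : c * (2370816 * d / b) ^ d < a := by rwa [ha, lt_div_iff₀ hK0]
  obtain ⟨η, hη, hηa⟩ : ∃ η : ℝ, 0 < η ∧
      (c + η) * (2370816 * d / (b / (1 + η))) ^ d + η < a := by
    have hcont : ContinuousAt (fun η : ℝ => (c + η) * (2370816 * d / (b / (1 + η))) ^ d + η) 0 := by
      have h1 : ContinuousAt (fun η : ℝ => b / (1 + η)) 0 :=
        continuousAt_const.div (by fun_prop) (by norm_num)
      have h2 : ContinuousAt (fun η : ℝ => 2370816 * (d : ℝ) / (b / (1 + η))) 0 :=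
        continuousAt_const.div h1 (by simpa using hb.ne')
      fun_prop
    have hlt := hcont.eventually_lt (continuousAt_const (y := a)) (by simpa using haA)
    obtain ⟨η, h1, h2⟩ := ((hlt.filter_mono nhdsWithin_le_nhds).and
      (self_mem_nhdsWithin (s := Set.Ioi (0 : ℝ)))).exists
    exact ⟨η, h2, h1⟩
  set b' := b / (1 + η) with hb'
  have hb'0 : 0 < b' := by positivity
  have hbb : b' < b := by rw [hb', div_lt_iff₀ (by positivity)]; nlinarith
  have hS : MeasurableSet {x | F x ≤ c} := measurableSet_le hF.measurable measurable_const
  have hFK : ∀ {L : Set (Fin (n + 1) → ℝ)}, IsCompact L →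
      IntegrableOn F L (gaussianN (n + 1)) := fun hL => hF.continuousOn.integrableOn_compact hL
  have hone : ∀ L : Set (Fin (n + 1) → ℝ),
      IntegrableOn ({x | F x ≤ c}.indicator fun _ => (1 : ℝ)) L (gaussianN (n + 1)) :=
    fun L => (integrable_const (1 : ℝ)).integrableOn.indicator hS
  have hcst : ∀ (L : Set (Fin (n + 1) → ℝ)) (r : ℝ),
      IntegrableOn (fun _ => r) L (gaussianN (n + 1)) := fun L r => (integrable_const r).integrableOn
  have hsubu : ∀ {L : Set (Fin (n + 1) → ℝ)}, IsCompact L →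
      ∫ x in L, (F x - a) ∂(gaussianN (n + 1)) =
        (∫ x in L, F x ∂(gaussianN (n + 1))) - a * (gaussianN (n + 1)).real L := by
    intro L hL
    rw [integral_sub (hFK hL) (hcst L a), setIntegral_const, smul_eq_mul, mul_comm a]
  have hsubv : ∀ L : Set (Fin (n + 1) → ℝ),
      ∫ x in L, ({x | F x ≤ c}.indicator (fun _ => (1 : ℝ)) x - b') ∂(gaussianN (n + 1)) =
        (gaussianN (n + 1)).real (L ∩ {x | F x ≤ c}) - b' * (gaussianN (n + 1)).real L := by
    intro L
    rw [integral_sub (hone L) (hcst L b'), setIntegral_const, smul_eq_mul,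
      setIntegral_indicator hS, setIntegral_const, smul_eq_mul, mul_one, mul_comm b']
  obtain ⟨L, -, hL, hLc, hu, hv, k, p, w, hnear⟩ := exists_convex_near_line hK hKc
    ((hFK hK).sub (hcst K a)) ((hone K).sub (hcst K b'))
    (by
      simp only [Pi.sub_apply]
      rw [hsubu hK, ha, div_mul_cancel₀ _ hK0.ne', sub_self])
    (by
      simp only [Pi.sub_apply]
      rw [hsubv K]
      nlinarith [mul_lt_mul_of_pos_right hbb hK0]) hF hη
  simp only [Pi.sub_apply] at hu hv
  rw [hsubu hL] at hu
  rw [hsubv L] at hv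
  have hL0 : 0 < (gaussianN (n + 1)).real L := by
    refine lt_of_le_of_ne measureReal_nonneg fun h0 => ?_
    have := measureReal_mono (μ := gaussianN (n + 1))
      (Set.inter_subset_left : L ∩ {x | F x ≤ c} ⊆ L)
    nlinarith
  have := setIntegral_le_of_near_line hF hF0 hd hline hL hLc hL0 hnear hη hb'0 hc (by linarith)
  nlinarith [mul_lt_mul_of_pos_right hηa hL0]

theorem integral_le_of_measure_le {n : ℕ} {F : (Fin n → ℝ) → ℝ} (hF : Continuous F)
    (hF0 : ∀ x, 0 ≤ F x) (hFi : Integrable F (gaussianN n)) {d : ℕ} (hd : 1 ≤ d)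
    (hline : ∀ a b : Fin n → ℝ, ∃ q : Polynomial ℝ, q.natDegree ≤ d ∧
      ∀ s : ℝ, F (a + s • b) = q.eval s)
    {b c : ℝ} (hb : 0 < b) (hc : 0 ≤ c)
    (hE : b ≤ (gaussianN n).real {x | F x ≤ c}) :
    ∫ x, F x ∂(gaussianN n) ≤ c * (4741632 * d / b) ^ d := by
  have hd' : (1 : ℝ) ≤ d := by exact_mod_cast hd
  rcases n with _ | n
  · have hb1 : b ≤ 1 := hE.trans measureReal_le_one
    have hne : {x | F x ≤ c} ≠ ∅ := by
      intro h
      rw [h, measureReal_empty] at hE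
      linarith
    obtain ⟨x, hx⟩ := Set.nonempty_iff_ne_empty.2 hne
    have h1 : ∫ y, F y ∂(gaussianN 0) = F x := by
      rw [integral_congr_ae (ae_of_all _ fun y => congrArg F (Subsingleton.elim y x))]
      simp
    rw [h1]
    refine le_trans (show F x ≤ c from hx) (le_mul_of_one_le_right hc (one_le_pow₀ ?_))
    rw [le_div_iff₀ hb]
    linarith
  let B : ℕ → Set (Fin (n + 1) → ℝ) := fun R => Set.Icc (fun _ => -(R : ℝ)) fun _ => (R : ℝ)
  have hBmono : Monotone B := fun R R' h => Set.Icc_subset_Icc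
    (fun _ => by simpa using h) (fun _ => by simpa using h)
  have hBU : ⋃ R, B R = Set.univ := by
    refine Set.eq_univ_of_forall fun x => Set.mem_iUnion.2 ?_
    obtain ⟨R, hR⟩ := exists_nat_ge ‖x‖
    refine ⟨R, fun i => ?_, fun i => ?_⟩
    · exact (abs_le.1 ((norm_le_pi_norm x i).trans hR)).1
    · exact (abs_le.1 ((norm_le_pi_norm x i).trans hR)).2
  have hlim1 : Filter.Tendsto (fun R => ∫ x in B R, F x ∂(gaussianN (n + 1))) Filter.atTop
      (nhds (∫ x, F x ∂(gaussianN (n + 1)))) := by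
    have := tendsto_setIntegral_of_monotone (μ := gaussianN (n + 1)) (f := F)
      (fun R => (measurableSet_Icc : MeasurableSet (B R))) hBmono hFi.integrableOn
    rwa [hBU, setIntegral_univ] at this
  have hlim2 : Filter.Tendsto (fun R => (gaussianN (n + 1)).real (B R ∩ {x | F x ≤ c}))
      Filter.atTop (nhds ((gaussianN (n + 1)).real {x | F x ≤ c})) := by
    have := tendsto_measure_iUnion_atTop (μ := gaussianN (n + 1))
      (s := fun R => B R ∩ {x | F x ≤ c})
      (fun R R' h => Set.inter_subset_inter_left _ (hBmono h))
    rw [← Set.iUnion_inter, hBU, Set.univ_inter] at this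
    exact (ENNReal.tendsto_toReal (measure_ne_top _ _)).comp this
  have hev : ∀ᶠ R in Filter.atTop, b / 2 < (gaussianN (n + 1)).real (B R ∩ {x | F x ≤ c}) :=
    hlim2.eventually (lt_mem_nhds (by linarith))
  refine le_of_tendsto hlim1 (hev.mono fun R hR => ?_)
  have hpos : 0 < (gaussianN (n + 1)).real (B R) :=
    lt_of_lt_of_le (by linarith) (measureReal_mono Set.inter_subset_left)
  have hle1 : (gaussianN (n + 1)).real (B R) ≤ 1 := measureReal_le_one
  have := setIntegral_le_of_measure_le hF hF0 hd hline (K := B R) isCompact_Icc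
    (convex_Icc _ _) hpos (half_pos hb) hc (by nlinarith)
  have e : (2370816 * d / (b / 2) : ℝ) = 4741632 * d / b := by field_simp; norm_num
  rw [e] at this
  refine this.trans (mul_le_of_le_one_right (by positivity) hle1)

theorem integrable_pow_gaussianReal (k : ℕ) :
    Integrable (fun t : ℝ => t ^ k) (gaussianReal 0 1) :=
  integrable_pow_of_mem_interior_integrableExpSet (X := fun t : ℝ => t)
    (by simp [integrableExpSet_fun_id_gaussianReal]) k

theorem integrable_eval_gaussianReal (q : Polynomial ℝ) :
    Integrable (fun t => q.eval t) (gaussianReal 0 1) := by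
  simp only [Polynomial.eval_eq_sum_range]
  exact integrable_finsetSum _ fun i _ => (integrable_pow_gaussianReal i).const_mul _

theorem hasDerivAt_gaussianPDFReal (t : ℝ) :
    HasDerivAt (gaussianPDFReal 0 1) (-t * gaussianPDFReal 0 1 t) t := by
  have h : HasDerivAt (fun x : ℝ => (Real.sqrt (2 * Real.pi * 1))⁻¹ * Real.exp (-(x - 0) ^ 2 / (2 * 1)))
      ((Real.sqrt (2 * Real.pi * 1))⁻¹ *
        (Real.exp (-(t - 0) ^ 2 / (2 * 1)) * (-(2 * (t - 0)) / (2 * 1)))) t := by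
    refine HasDerivAt.const_mul _ (HasDerivAt.exp ?_)
    refine HasDerivAt.div_const ?_ _
    convert! (((hasDerivAt_id t).sub_const 0).pow 2).neg using 1
    simp
  simp only [gaussianPDFReal_def, NNReal.coe_one]
  convert! h using 1
  ring

theorem integral_mul_eval_gaussianReal (q : Polynomial ℝ) :
    ∫ t, t * q.eval t ∂(gaussianReal 0 1) = ∫ t, q.derivative.eval t ∂(gaussianReal 0 1) := by
  have hpdf : ∀ p : Polynomial ℝ, Integrable fun t => gaussianPDFReal 0 1 t * p.eval t := by
    intro p
    have := integrable_eval_gaussianReal p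
    rw [gaussianReal_of_var_ne_zero _ one_ne_zero, integrable_withDensity_iff_integrable_smul'
      (measurable_gaussianPDF 0 1) (ae_of_all _ fun _ => gaussianPDF_lt_top)] at this
    simpa [toReal_gaussianPDF] using this
  have h1 := hpdf (Polynomial.X * q)
  have h2 := hpdf q.derivative
  simp only [Polynomial.eval_mul, Polynomial.eval_X] at h1
  have := integral_eq_zero_of_hasDerivAt_of_integrable
    (f := fun t => gaussianPDFReal 0 1 t * q.eval t)
    (fun t => (hasDerivAt_gaussianPDFReal t).mul (q.hasDerivAt t))
    ((h2.sub h1).congr (ae_of_all _ fun t => by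
      simp only [Pi.sub_apply]; ring)) (hpdf q)
  rw [integral_gaussianReal_eq_integral_smul one_ne_zero,
    integral_gaussianReal_eq_integral_smul one_ne_zero]
  simp only [smul_eq_mul]
  rw [← sub_eq_zero, ← integral_sub h1 h2, ← neg_eq_zero, ← integral_neg]
  refine Eq.trans ?_ this
  refine integral_congr_ae (ae_of_all _ fun t => ?_)
  ring

/-- The Hermite polynomials with real coefficients. -/
noncomputable def hermiteReal (k : ℕ) : Polynomial ℝ :=
  (Polynomial.hermite k).map (Int.castRingHom ℝ)

theorem hermiteReal_succ (k : ℕ) :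
    hermiteReal (k + 1) = Polynomial.X * hermiteReal k - (hermiteReal k).derivative := by
  simp [hermiteReal, Polynomial.hermite_succ, Polynomial.derivative_map]

theorem natDegree_hermiteReal (k : ℕ) : (hermiteReal k).natDegree = k := by
  rw [hermiteReal, (Polynomial.hermite_monic k).natDegree_map, Polynomial.natDegree_hermite]

theorem hermiteReal_monic (k : ℕ) : (hermiteReal k).Monic := (Polynomial.hermite_monic k).map _

theorem integral_hermiteReal_mul (k : ℕ) (p : Polynomial ℝ) :
    ∫ t, (hermiteReal k).eval t * p.eval t ∂(gaussianReal 0 1) =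
      ∫ t, (Polynomial.derivative^[k] p).eval t ∂(gaussianReal 0 1) := by
  induction k generalizing p with
  | zero => simp [hermiteReal]
  | succ k ih =>
    rw [Function.iterate_succ_apply, ← ih]
    have h := integral_mul_eval_gaussianReal (hermiteReal k * p)
    simp only [Polynomial.derivative_mul, Polynomial.eval_add, Polynomial.eval_mul] at h
    have i1 := integrable_eval_gaussianReal ((hermiteReal k).derivative * p)
    have i2 := integrable_eval_gaussianReal (hermiteReal k * p.derivative)
    have i3 := integrable_eval_gaussianReal (Polynomial.X * (hermiteReal k * p))
    simp only [Polynomial.eval_mul, Polynomial.eval_X] at i1 i2 i3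
    rw [integral_add i1 i2] at h
    rw [← sub_eq_iff_eq_add', ← integral_sub i3 i1] at h
    rw [← h]
    refine integral_congr_ae (ae_of_all _ fun t => ?_)
    simp only [hermiteReal_succ, Polynomial.eval_sub, Polynomial.eval_mul, Polynomial.eval_X]
    ring

theorem integral_hermiteReal_mul_of_lt {j k : ℕ} (h : j < k) :
    ∫ t, (hermiteReal k).eval t * (hermiteReal j).eval t ∂(gaussianReal 0 1) = 0 := by
  rw [integral_hermiteReal_mul, Polynomial.iterate_derivative_eq_zero
    (by rwa [natDegree_hermiteReal])]
  simp

theorem integral_hermiteFn_mul (j k : ℕ) :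
    ∫ t, hermiteFn j t * hermiteFn k t ∂(gaussianReal 0 1) = if j = k then 1 else 0 := by
  have e : ∀ t, hermiteFn j t * hermiteFn k t =
      (Real.sqrt (Nat.factorial j) * Real.sqrt (Nat.factorial k))⁻¹ *
        ((hermiteReal j).eval t * (hermiteReal k).eval t) := by
    intro t
    simp only [hermiteFn, hermiteReal]
    field_simp
  simp only [e]
  rw [integral_const_mul]
  split_ifs with h
  · subst h
    have h0 : Polynomial.derivative^[j] (hermiteReal j) = Polynomial.C (Nat.factorial j : ℝ) := by
      ext m
      rw [Polynomial.coeff_iterate_derivative, Polynomial.coeff_C]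
      split_ifs with hm
      · subst hm
        have := (hermiteReal_monic j).coeff_natDegree
        rw [natDegree_hermiteReal] at this
        simp [this, Nat.descFactorial_self]
      · rw [Polynomial.coeff_eq_zero_of_natDegree_lt (by rw [natDegree_hermiteReal]; omega),
          smul_zero]
    rw [integral_hermiteReal_mul, h0]
    simp only [Polynomial.eval_C, integral_const, probReal_univ, one_smul]
    rw [Real.mul_self_sqrt (by positivity)]
    exact inv_mul_cancel₀ (by positivity)
  · rcases lt_or_gt_of_ne h with h | h
    · simp only [mul_comm ((hermiteReal j).eval _)]
      rw [integral_hermiteReal_mul_of_lt h, mul_zero]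
    · rw [integral_hermiteReal_mul_of_lt h, mul_zero]

theorem hermiteFn_eq (k : ℕ) (t : ℝ) :
    hermiteFn k t = (hermiteReal k).eval t / Real.sqrt (Nat.factorial k) := rfl

theorem exists_pow_eq_sum_hermiteFn (j : ℕ) :
    ∃ e : ℕ → ℝ, ∀ D, j ≤ D → ∀ t : ℝ, t ^ j = ∑ i ∈ Finset.range (D + 1), e i * hermiteFn i t := by
  suffices h : ∀ (j : ℕ) (q : Polynomial ℝ), q.natDegree ≤ j → ∃ e : ℕ → ℝ,
      (∀ i, j < i → e i = 0) ∧
      ∀ t : ℝ, q.eval t = ∑ i ∈ Finset.range (j + 1), e i * hermiteFn i t by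
    obtain ⟨e, he, h⟩ := h j (Polynomial.X ^ j) (Polynomial.natDegree_X_pow_le j)
    refine ⟨e, fun D hD t => ?_⟩
    have h1 := h t
    simp only [Polynomial.eval_pow, Polynomial.eval_X] at h1
    rw [h1]
    refine Finset.sum_subset (Finset.range_mono (by omega)) fun i _ hi => ?_
    rw [he i (by simpa using hi), zero_mul]
  intro j
  induction j with
  | zero =>
    intro q hq
    rw [Polynomial.eq_C_of_natDegree_le_zero hq]
    refine ⟨fun i => if i = 0 then q.coeff 0 else 0, fun i hi => by simp [hi.ne'], fun t => ?_⟩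
    simp [hermiteFn]
  | succ j ih =>
    intro q hq
    obtain ⟨e, he, h⟩ := ih (q - Polynomial.C (q.coeff (j + 1)) * hermiteReal (j + 1)) (by
      rw [Polynomial.natDegree_le_iff_coeff_eq_zero]
      intro m hm
      rw [Polynomial.coeff_sub, Polynomial.coeff_C_mul]
      rcases (Nat.succ_le_of_lt hm).eq_or_lt with h | h
      · have := (hermiteReal_monic (j + 1)).coeff_natDegree
        rw [natDegree_hermiteReal] at this
        rw [← h, Nat.succ_eq_add_one, this, mul_one, sub_self]
      · rw [Polynomial.coeff_eq_zero_of_natDegree_lt (lt_of_le_of_lt hq h),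
          Polynomial.coeff_eq_zero_of_natDegree_lt (p := hermiteReal (j + 1))
            (by rw [natDegree_hermiteReal]; exact h), mul_zero, sub_self])
    refine ⟨fun i => if i = j + 1 then q.coeff (j + 1) * Real.sqrt (Nat.factorial (j + 1)) else e i,
      fun i hi => ?_, fun t => ?_⟩
    · simp only [show i ≠ j + 1 by omega, if_false, he i (by omega)]
    · have h1 := h t
      rw [Polynomial.eval_sub, Polynomial.eval_mul, Polynomial.eval_C, sub_eq_iff_eq_add] at h1
      rw [h1, Finset.sum_range_succ _ (j + 1)]
      simp only [if_true]
      congr 1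
      · refine Finset.sum_congr rfl fun i hi => ?_
        rw [if_neg (by have := Finset.mem_range.1 hi; omega)]
      · rw [hermiteFn_eq]
        have : Real.sqrt (Nat.factorial (j + 1)) ≠ 0 := by positivity
        field_simp

theorem integral_hermiteMv_mul {n : ℕ} (α β : Fin n → ℕ) :
    ∫ x, hermiteMv α x * hermiteMv β x ∂(gaussianN n) = if α = β then 1 else 0 := by
  simp only [hermiteMv, ← Finset.prod_mul_distrib, gaussianN]
  rw [integral_fintype_prod_eq_prod (fun i t => hermiteFn (α i) t * hermiteFn (β i) t)]
  simp only [integral_hermiteFn_mul]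
  rw [Finset.prod_ite_zero]
  simp [funext_iff]

/-- `F` is given by a polynomial of total degree at most `D`. -/
def IsPolyOfDegreeLE {n : ℕ} (D : ℕ) (F : (Fin n → ℝ) → ℝ) : Prop :=
  ∃ P : MvPolynomial (Fin n) ℝ, P.totalDegree ≤ D ∧ ∀ x, F x = eval x P

namespace IsPolyOfDegreeLE

variable {n D E : ℕ} {F G : (Fin n → ℝ) → ℝ}

theorem const (D : ℕ) (c : ℝ) : IsPolyOfDegreeLE D fun _ : Fin n → ℝ => c :=
  ⟨C c, by simp, by simp⟩

theorem coord (i : Fin n) : IsPolyOfDegreeLE 1 fun x : Fin n → ℝ => x i :=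
  ⟨X i, by simp, by simp⟩

theorem mono (hF : IsPolyOfDegreeLE D F) (h : D ≤ E) : IsPolyOfDegreeLE E F := by
  obtain ⟨P, hP, e⟩ := hF
  exact ⟨P, hP.trans h, e⟩

theorem add (hF : IsPolyOfDegreeLE D F) (hG : IsPolyOfDegreeLE D G) :
    IsPolyOfDegreeLE D fun x => F x + G x := by
  obtain ⟨P, hP, e⟩ := hF
  obtain ⟨Q, hQ, e'⟩ := hG
  exact ⟨P + Q, (totalDegree_add P Q).trans (max_le hP hQ), fun x => by simp [e, e']⟩

theorem mul (hF : IsPolyOfDegreeLE D F) (hG : IsPolyOfDegreeLE E G) :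
    IsPolyOfDegreeLE (D + E) fun x => F x * G x := by
  obtain ⟨P, hP, e⟩ := hF
  obtain ⟨Q, hQ, e'⟩ := hG
  exact ⟨P * Q, (totalDegree_mul P Q).trans (add_le_add hP hQ), fun x => by simp [e, e']⟩

theorem const_mul (c : ℝ) (hF : IsPolyOfDegreeLE D F) : IsPolyOfDegreeLE D fun x => c * F x := by
  simpa using (const 0 c).mul hF

theorem pow (hF : IsPolyOfDegreeLE D F) (k : ℕ) : IsPolyOfDegreeLE (k * D) fun x => F x ^ k := by
  induction k with
  | zero => simpa using const (n := n) 0 1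
  | succ k ih => simpa [pow_succ, add_mul] using ih.mul hF

theorem sum {ι : Type*} (s : Finset ι) {f : ι → (Fin n → ℝ) → ℝ}
    (h : ∀ i ∈ s, IsPolyOfDegreeLE D (f i)) : IsPolyOfDegreeLE D fun x => ∑ i ∈ s, f i x := by
  classical
  induction s using Finset.induction_on with
  | empty => simpa using const (n := n) D 0
  | insert i s hi ih =>
    simp only [Finset.sum_insert hi]
    exact (h i (by simp)).add (ih fun j hj => h j (by simp [hj]))

theorem prod {ι : Type*} (s : Finset ι) {f : ι → (Fin n → ℝ) → ℝ} {δ : ι → ℕ}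
    (h : ∀ i ∈ s, IsPolyOfDegreeLE (δ i) (f i)) :
    IsPolyOfDegreeLE (∑ i ∈ s, δ i) fun x => ∏ i ∈ s, f i x := by
  classical
  induction s using Finset.induction_on with
  | empty => simpa using const (n := n) 0 1
  | insert i s hi ih =>
    simp only [Finset.prod_insert hi, Finset.sum_insert hi]
    exact (h i (by simp)).mul (ih fun j hj => h j (by simp [hj]))

theorem continuous (hF : IsPolyOfDegreeLE D F) : Continuous F := by
  obtain ⟨P, -, e⟩ := hF
  rw [show F = fun x => eval x P from funext e]
  exact MvPolynomial.continuous_eval P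

theorem integrable (hF : IsPolyOfDegreeLE D F) : Integrable F (gaussianN n) := by
  obtain ⟨P, -, e⟩ := hF
  rw [show F = fun x => eval x P from funext e]
  simp only [eval_eq', gaussianN]
  exact integrable_finsetSum _ fun m _ => (Integrable.fintype_prod
    (f := fun i t => t ^ m i) fun i => integrable_pow_gaussianReal (m i)).const_mul _

theorem integrable_affine (hF : IsPolyOfDegreeLE D F) (a b : ℝ) (x : Fin n → ℝ) :
    Integrable (fun y => F (a • x + b • y)) (gaussianN n) := by
  obtain ⟨P, -, e⟩ := hF
  refine integrable (D := _)
    ⟨aeval (fun i => C (a * x i) + C b * X i : Fin n → MvPolynomial (Fin n) ℝ) P, le_rfl, fun y => ?_⟩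
  simp only [e]
  rw [map_aeval, eval_eq', coe_eval₂Hom, eval₂_eq']
  simp

theorem exists_line (hF : IsPolyOfDegreeLE D F) (a b : Fin n → ℝ) :
    ∃ q : Polynomial ℝ, q.natDegree ≤ D ∧ ∀ s : ℝ, F (a + s • b) = q.eval s := by
  obtain ⟨P, hP, e⟩ := hF
  refine ⟨∑ m ∈ P.support, Polynomial.C (P.coeff m) *
    ∏ i, (Polynomial.C (a i) + Polynomial.X * Polynomial.C (b i)) ^ m i, ?_, fun s => ?_⟩
  · refine Polynomial.natDegree_sum_le_of_forall_le _ _ fun m hm => ?_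
    refine (Polynomial.natDegree_C_mul_le _ _).trans ((Polynomial.natDegree_prod_le _ _).trans ?_)
    refine le_trans (Finset.sum_le_sum (g := fun i => m i) fun i _ => ?_) ?_
    · refine Polynomial.natDegree_pow_le.trans ?_
      refine mul_le_of_le_one_right (Nat.zero_le _) ?_
      refine Polynomial.natDegree_add_le_of_degree_le (by simp) ?_
      exact (Polynomial.natDegree_mul_C_le _ _).trans Polynomial.natDegree_X_le
    · refine le_trans (le_of_eq ?_) ((le_totalDegree hm).trans hP)
      rw [Finsupp.sum_fintype _ _ fun _ => rfl]
  · rw [e, eval_eq']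
    simp [Polynomial.eval_finsetSum, Polynomial.eval_prod, mul_comm s]

theorem smoothing (hF : IsPolyOfDegreeLE D F) (a b : ℝ) :
    IsPolyOfDegreeLE D fun x => ∫ y, F (a • x + b • y) ∂(gaussianN n) := by
  obtain ⟨P, hP, e⟩ := hF
  have key : ∀ x, ∫ y, F (a • x + b • y) ∂(gaussianN n) = ∑ m ∈ P.support, P.coeff m *
      ∏ i, ∑ j ∈ Finset.range (m i + 1), ((a ^ j * b ^ (m i - j) * (m i).choose j *
        ∫ t, t ^ (m i - j) ∂(gaussianReal 0 1)) * x i ^ j) := by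
    intro x
    have hpow : ∀ k : ℕ, ∀ c : ℝ, Integrable (fun t => (c + b * t) ^ k) (gaussianReal 0 1) := by
      intro k c
      refine (integrable_eval_gaussianReal
        ((Polynomial.C c + Polynomial.C b * Polynomial.X) ^ k)).congr (ae_of_all _ fun t => ?_)
      simp
    simp only [e, eval_eq', gaussianN, Pi.add_apply, Pi.smul_apply, smul_eq_mul]
    rw [integral_finsetSum _ fun m _ => (Integrable.fintype_prod
      (f := fun i t => (a * x i + b * t) ^ m i) fun i => hpow (m i) _).const_mul _]
    refine Finset.sum_congr rfl fun m _ => ?_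
    rw [integral_const_mul, integral_fintype_prod_eq_prod (fun i t => (a * x i + b * t) ^ m i)]
    congr 1
    refine Finset.prod_congr rfl fun i _ => ?_
    simp only [add_pow, mul_pow]
    rw [integral_finsetSum _ fun j _ =>
      (((integrable_pow_gaussianReal (m i - j)).const_mul _).const_mul _).mul_const _]
    refine Finset.sum_congr rfl fun j _ => ?_
    rw [integral_mul_const, integral_const_mul, integral_const_mul]
    ring
  simp only [key]
  refine sum _ fun m hm => const_mul _ ?_
  have hdeg : ∑ i, m i ≤ D := by
    refine le_trans (le_of_eq ?_) ((le_totalDegree hm).trans hP)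
    rw [Finsupp.sum_fintype _ _ fun _ => rfl]
  refine (prod (δ := fun i => m i) _ fun i _ => sum _ fun j hj => const_mul _ ?_).mono hdeg
  refine ((coord i).pow j).mono ?_
  have := Finset.mem_range.1 hj
  omega

end IsPolyOfDegreeLE

theorem map_add_gaussianReal {a b : ℝ} (h : a ^ 2 + b ^ 2 = 1) :
    MeasurePreserving (fun p : ℝ × ℝ => a * p.1 + b * p.2)
      ((gaussianReal 0 1).prod (gaussianReal 0 1)) (gaussianReal 0 1) := by
  refine ⟨by fun_prop, ?_⟩
  have h1 : (fun p : ℝ × ℝ => a * p.1 + b * p.2) =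
      (fun p : ℝ × ℝ => p.1 + p.2) ∘ Prod.map (fun t => a * t) fun t => b * t := rfl
  rw [h1, ← Measure.map_map (by fun_prop) (by fun_prop),
    ← Measure.map_prod_map _ _ (by fun_prop) (by fun_prop), gaussianReal_map_const_mul,
    gaussianReal_map_const_mul]
  have := gaussianReal_conv_gaussianReal (m₁ := a * 0) (m₂ := b * 0) (v₁ := .mk (a ^ 2) (sq_nonneg _) * 1)
    (v₂ := .mk (b ^ 2) (sq_nonneg _) * 1)
  rw [Measure.conv] at this
  rw [this]
  congr 1
  · simp
  · ext
    simpa using h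

theorem measurePreserving_add_gaussianN (n : ℕ) {a b : ℝ} (h : a ^ 2 + b ^ 2 = 1) :
    MeasurePreserving (fun p : (Fin n → ℝ) × (Fin n → ℝ) => a • p.1 + b • p.2)
      ((gaussianN n).prod (gaussianN n)) (gaussianN n) := by
  have h1 := (measurePreserving_arrowProdEquivProdArrow ℝ ℝ (Fin n)
    (fun _ => gaussianReal 0 1) fun _ => gaussianReal 0 1).symm
  have h2 := measurePreserving_pi (fun _ : Fin n => (gaussianReal 0 1).prod (gaussianReal 0 1))
    (fun _ => gaussianReal 0 1) fun _ => map_add_gaussianReal h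
  exact h2.comp h1

theorem IsPolyOfDegreeLE.integral_smoothing {n D : ℕ} {F : (Fin n → ℝ) → ℝ}
    (hF : IsPolyOfDegreeLE D F) {a b : ℝ} (h : a ^ 2 + b ^ 2 = 1) :
    ∫ x, ∫ y, F (a • x + b • y) ∂(gaussianN n) ∂(gaussianN n) = ∫ x, F x ∂(gaussianN n) := by
  have hmp := measurePreserving_add_gaussianN n h
  have hi : Integrable (fun p : (Fin n → ℝ) × (Fin n → ℝ) => F (a • p.1 + b • p.2))
      ((gaussianN n).prod (gaussianN n)) :=
    hmp.integrable_comp_of_integrable hF.integrable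
  rw [← integral_prod _ hi, ← integral_map (f := F) hmp.measurable.aemeasurable
    hF.continuous.aestronglyMeasurable, hmp.map_eq]

theorem IsPolyOfDegreeLE.measureReal_lt_of_nonneg {n D : ℕ} {F : (Fin n → ℝ) → ℝ}
    (hF : IsPolyOfDegreeLE D F) (hF0 : ∀ x, 0 ≤ F x) (hD : 1 ≤ D) {b c : ℝ} (hb : 0 < b)
    (hc : 0 ≤ c) (h : c * (4741632 * D / b) ^ D < ∫ x, F x ∂(gaussianN n)) :
    (gaussianN n).real {x | F x ≤ c} < b := by
  by_contra! hE
  exact absurd (integral_le_of_measure_le hF.continuous hF0 hF.integrable hD hF.exists_line hb hc hE)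
    (not_le.2 h)

theorem isPolyOfDegreeLE_hermiteMv {n : ℕ} (α : Fin n → ℕ) :
    IsPolyOfDegreeLE (∑ i, α i) (hermiteMv α) := by
  refine IsPolyOfDegreeLE.prod Finset.univ (f := fun i (x : Fin n → ℝ) => hermiteFn (α i) (x i))
    fun i _ => ?_
  simp only [hermiteFn_eq, Polynomial.eval_eq_sum_range, div_eq_inv_mul, Finset.mul_sum]
  refine .sum _ fun j hj => .const_mul _ (.const_mul _ (((IsPolyOfDegreeLE.coord i).pow j).mono ?_))
  rw [natDegree_hermiteReal, Finset.mem_range] at hj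
  omega

/-- The multi-indices all of whose entries are at most `d`. -/
def boxIndices (n d : ℕ) : Finset (Fin n → ℕ) := Fintype.piFinset fun _ => Finset.range (d + 1)

theorem eval_eq_sum_boxIndices {n d : ℕ} {p : MvPolynomial (Fin n) ℝ} (hp : p.totalDegree ≤ d)
    (z : Fin n → ℝ) :
    eval z p = ∑ a ∈ boxIndices n d, coeff (Finsupp.equivFunOnFinite.symm a) p * ∏ i, z i ^ a i := by
  rw [eval_eq']
  refine Finset.sum_of_injOn (fun m => (m : Fin n → ℕ)) (DFunLike.coe_injective.injOn) ?_ ?_ ?_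
  · intro m hm
    refine Fintype.mem_piFinset.2 fun i => Finset.mem_range.2 ?_
    have h1 := (le_totalDegree hm).trans hp
    rw [Finsupp.sum_fintype _ _ fun _ => rfl] at h1
    have h2 := Finset.single_le_sum (f := fun i => m i) (fun _ _ => Nat.zero_le _) (Finset.mem_univ i)
    change m i < d + 1
    omega
  · intro a _ ha
    have : Finsupp.equivFunOnFinite.symm a ∉ p.support := fun h => ha ⟨_, h, by simp⟩
    rw [notMem_support_iff.1 this, zero_mul]
  · intro m _
    simp

theorem exists_hermite_expansion (n d : ℕ) : ∃ E : (Fin n → ℕ) → (Fin n → ℕ) → ℝ,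
    ∀ p : MvPolynomial (Fin n) ℝ, p.totalDegree ≤ d → ∀ z, eval z p =
      ∑ α ∈ boxIndices n d,
        (∑ a ∈ boxIndices n d, coeff (Finsupp.equivFunOnFinite.symm a) p * E a α) *
          hermiteMv α z := by
  choose e he using exists_pow_eq_sum_hermiteFn
  refine ⟨fun a α => ∏ i, e (a i) (α i), fun p hp z => ?_⟩
  simp only [eval_eq_sum_boxIndices hp z, Finset.sum_mul]
  rw [Finset.sum_comm]
  refine Finset.sum_congr rfl fun a ha => ?_
  have h1 : ∏ i, z i ^ a i = ∏ i, ∑ j ∈ Finset.range (d + 1), e (a i) j * hermiteFn j (z i) :=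
    Finset.prod_congr rfl fun i _ => he (a i) d
      (by have := Finset.mem_range.1 (Fintype.mem_piFinset.1 ha i); omega) (z i)
  rw [h1, Finset.prod_univ_sum, Finset.mul_sum]
  refine Finset.sum_congr rfl fun α _ => ?_
  rw [Finset.prod_mul_distrib, hermiteMv, mul_assoc]

theorem integrable_hermiteMv_mul {n : ℕ} (α β : Fin n → ℕ) :
    Integrable (fun x => hermiteMv α x * hermiteMv β x) (gaussianN n) :=
  ((isPolyOfDegreeLE_hermiteMv α).mul (isPolyOfDegreeLE_hermiteMv β)).integrable

theorem hermiteCoeff_eq_of_expansion {n : ℕ} {p : MvPolynomial (Fin n) ℝ}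
    {Λ : Finset (Fin n → ℕ)} {c : (Fin n → ℕ) → ℝ}
    (h : ∀ z, eval z p = ∑ α ∈ Λ, c α * hermiteMv α z) (β : Fin n → ℕ) :
    hermiteCoeff p β = if β ∈ Λ then c β else 0 := by
  simp only [hermiteCoeff, hermiteCoeffF, h, Finset.sum_mul, mul_assoc]
  rw [integral_finsetSum _ fun α _ => (integrable_hermiteMv_mul α β).const_mul _]
  simp only [integral_const_mul, integral_hermiteMv_mul, mul_ite, mul_one, mul_zero]
  rw [Finset.sum_ite_eq' Λ β]

theorem hyperVarGE_eq_of_expansion {n : ℕ} {p : MvPolynomial (Fin n) ℝ}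
    {Λ : Finset (Fin n → ℕ)} {c : (Fin n → ℕ) → ℝ}
    (h : ∀ z, eval z p = ∑ α ∈ Λ, c α * hermiteMv α z) (R : ℝ) (m : ℕ) :
    hyperVarGE R m p =
      ∑ α ∈ Λ with m ≤ ∑ i, α i, R ^ (2 * ∑ i, α i) * c α ^ 2 := by
  rw [hyperVarGE, tsum_eq_sum (s := Λ) fun α hα => by
    simp [hermiteCoeff_eq_of_expansion h α, hα], Finset.sum_filter]
  refine Finset.sum_congr rfl fun α hα => ?_
  rw [hermiteCoeff_eq_of_expansion h α, if_pos hα]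

theorem eval_zoom {n : ℕ} (g : MvPolynomial (Fin n) ℝ) (lam : ℝ) (x y : Fin n → ℝ) :
    eval y (zoom g lam x) = eval (Real.sqrt (1 - lam) • x + Real.sqrt lam • y) g := by
  rw [zoom, map_aeval, eval_eq', coe_eval₂Hom, eval₂_eq']
  simp

section Family

variable {n I D : ℕ} (c : (Fin n → ℕ) → (Fin I → ℝ) → ℝ)

/-- The average of the squares of the polynomials `∑ α ∈ Λ, c α υ • h_α` at a point. -/
noncomputable def averageSq (Λ : Finset (Fin n → ℕ)) (z : Fin n → ℝ) : ℝ :=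
  ∫ υ, (∑ α ∈ Λ, c α υ * hermiteMv α z) ^ 2 ∂(gaussianN I)

theorem averageSq_nonneg (Λ : Finset (Fin n → ℕ)) (z : Fin n → ℝ) : 0 ≤ averageSq c Λ z :=
  integral_nonneg fun _ => sq_nonneg _

variable {c}

theorem integral_sum_mul_sq (hc : ∀ α, IsPolyOfDegreeLE D (c α)) (Λ : Finset (Fin n → ℕ)) (w : (Fin n → ℕ) → (Fin n → ℕ) → ℝ) :
    ∫ υ, ∑ α ∈ Λ, ∑ β ∈ Λ, c α υ * c β υ * w α β ∂(gaussianN I) =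
      ∑ α ∈ Λ, ∑ β ∈ Λ, (∫ υ, c α υ * c β υ ∂(gaussianN I)) * w α β := by
  have hi : ∀ α β, Integrable (fun υ => c α υ * c β υ * w α β) (gaussianN I) := fun α β =>
    ((hc α).mul (hc β)).integrable.mul_const _
  rw [integral_finsetSum _ fun α _ => integrable_finsetSum _ fun β _ => hi α β]
  refine Finset.sum_congr rfl fun α _ => ?_
  rw [integral_finsetSum _ fun β _ => hi α β]
  exact Finset.sum_congr rfl fun β _ => integral_mul_const _ _

theorem averageSq_eq (hc : ∀ α, IsPolyOfDegreeLE D (c α)) (Λ : Finset (Fin n → ℕ)) (z : Fin n → ℝ) :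
    averageSq c Λ z = ∑ α ∈ Λ, ∑ β ∈ Λ, (∫ υ, c α υ * c β υ ∂(gaussianN I)) *
      (hermiteMv α z * hermiteMv β z) := by
  rw [← integral_sum_mul_sq hc, averageSq]
  refine integral_congr_ae (ae_of_all _ fun υ => ?_)
  simp only [sq, Finset.sum_mul_sum]
  exact Finset.sum_congr rfl fun α _ => Finset.sum_congr rfl fun β _ => by ring

theorem isPolyOfDegreeLE_averageSq (hc : ∀ α, IsPolyOfDegreeLE D (c α)) {Λ : Finset (Fin n → ℕ)} {k : ℕ}
    (hΛ : ∀ α ∈ Λ, ∑ i, α i ≤ k) : IsPolyOfDegreeLE (2 * k) (averageSq c Λ) := by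
  rw [show averageSq c Λ = _ from funext (averageSq_eq hc Λ)]
  refine .sum _ fun α hα => .sum _ fun β hβ => .const_mul _ ?_
  refine ((isPolyOfDegreeLE_hermiteMv α).mul (isPolyOfDegreeLE_hermiteMv β)).mono ?_
  have := hΛ α hα
  have := hΛ β hβ
  omega

theorem exists_isPolyOfDegreeLE_averageSq (hc : ∀ α, IsPolyOfDegreeLE D (c α)) (Λ : Finset (Fin n → ℕ)) :
    ∃ k, IsPolyOfDegreeLE k (averageSq c Λ) :=
  ⟨_, isPolyOfDegreeLE_averageSq hc (k := Λ.sup fun α => ∑ i, α i) fun _ hα =>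
    Finset.le_sup (f := fun α : Fin n → ℕ => ∑ i, α i) hα⟩

theorem integral_averageSq (hc : ∀ α, IsPolyOfDegreeLE D (c α)) (Λ : Finset (Fin n → ℕ)) :
    ∫ z, averageSq c Λ z ∂(gaussianN n) = ∑ α ∈ Λ, ∫ υ, c α υ ^ 2 ∂(gaussianN I) := by
  simp only [averageSq_eq hc]
  have hi : ∀ α β, Integrable (fun z => (∫ υ, c α υ * c β υ ∂(gaussianN I)) *
      (hermiteMv α z * hermiteMv β z)) (gaussianN n) := fun α β =>
    (integrable_hermiteMv_mul α β).const_mul _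
  rw [integral_finsetSum _ fun α _ => integrable_finsetSum _ fun β _ => hi α β]
  refine Finset.sum_congr rfl fun α hα => ?_
  rw [integral_finsetSum _ fun β _ => hi α β]
  simp only [integral_const_mul, integral_hermiteMv_mul, mul_ite, mul_one, mul_zero]
  rw [Finset.sum_ite_eq Λ α, if_pos hα]
  simp only [sq]

/-- Exchange of the average over the family with the Gaussian average in space. -/
theorem integral_integral_sq (hc : ∀ α, IsPolyOfDegreeLE D (c α)) (Λ : Finset (Fin n → ℕ)) (a b : ℝ) (x : Fin n → ℝ) :
    ∫ υ, ∫ y, (∑ α ∈ Λ, c α υ * hermiteMv α (a • x + b • y)) ^ 2 ∂(gaussianN n) ∂(gaussianN I) =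
      ∫ y, averageSq c Λ (a • x + b • y) ∂(gaussianN n) := by
  have hi : ∀ α β, Integrable (fun y => hermiteMv α (a • x + b • y) * hermiteMv β (a • x + b • y))
      (gaussianN n) :=
    fun α β => ((isPolyOfDegreeLE_hermiteMv α).mul
      (isPolyOfDegreeLE_hermiteMv β)).integrable_affine a b x
  have h1 : ∀ w : (Fin n → ℕ) → (Fin n → ℕ) → ℝ,
      ∫ y, ∑ α ∈ Λ, ∑ β ∈ Λ, w α β * (hermiteMv α (a • x + b • y) * hermiteMv β (a • x + b • y))
        ∂(gaussianN n) = ∑ α ∈ Λ, ∑ β ∈ Λ, w α β *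
        ∫ y, hermiteMv α (a • x + b • y) * hermiteMv β (a • x + b • y) ∂(gaussianN n) := by
    intro w
    rw [integral_finsetSum _ fun α _ => integrable_finsetSum _ fun β _ => (hi α β).const_mul _]
    refine Finset.sum_congr rfl fun α _ => ?_
    rw [integral_finsetSum _ fun β _ => (hi α β).const_mul _]
    exact Finset.sum_congr rfl fun β _ => integral_const_mul _ _
  simp only [averageSq_eq hc, h1]
  rw [← integral_sum_mul_sq hc]
  refine integral_congr_ae (ae_of_all _ fun υ => ?_)
  simp only
  rw [← h1 fun α β => c α υ * c β υ]
  refine integral_congr_ae (ae_of_all _ fun y => ?_)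
  simp only [sq, Finset.sum_mul_sum]
  exact Finset.sum_congr rfl fun α _ => Finset.sum_congr rfl fun β _ => by ring

theorem averageSq_filter_le (hc : ∀ α, IsPolyOfDegreeLE D (c α)) (Λ : Finset (Fin n → ℕ)) (k : ℕ) (z : Fin n → ℝ) :
    averageSq c {α ∈ Λ | ¬ k + 1 ≤ ∑ i, α i} z ≤
      2 * averageSq c Λ z + 2 * averageSq c {α ∈ Λ | k + 1 ≤ ∑ i, α i} z := by
  have hi : ∀ Λ : Finset (Fin n → ℕ),
      Integrable (fun υ => (∑ α ∈ Λ, c α υ * hermiteMv α z) ^ 2) (gaussianN I) := fun Λ =>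
    (IsPolyOfDegreeLE.pow (.sum _ fun α _ => (hc α).mul (.const 0 _)) 2).integrable
  simp only [averageSq]
  rw [← integral_const_mul, ← integral_const_mul,
    ← integral_add ((hi _).const_mul _) ((hi _).const_mul _)]
  refine integral_mono (hi _) (((hi _).const_mul _).add ((hi _).const_mul _)) fun υ => ?_
  have := Finset.sum_filter_add_sum_filter_not Λ (fun α => k + 1 ≤ ∑ i, α i)
    fun α => c α υ * hermiteMv α z
  simp only [← this]
  nlinarith [sq_nonneg ((∑ α ∈ Λ with k + 1 ≤ ∑ i, α i, c α υ * hermiteMv α z) * 2 +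
    ∑ α ∈ Λ with ¬ k + 1 ≤ ∑ i, α i, c α υ * hermiteMv α z)]

end Family

theorem gaussianN_not_le_of_split {n k : ℕ} (hk : 1 ≤ k) {U V W : (Fin n → ℝ) → ℝ}
    (hU : IsPolyOfDegreeLE (2 * k) U) (hU0 : ∀ x, 0 ≤ U x) (hV : Integrable V (gaussianN n))
    (hV0 : ∀ x, 0 ≤ V x) (hW : ∀ x, U x / 2 - V x ≤ W x) {N β : ℝ} (hN : 0 < N) (hβ : 0 < β)
    (hUi : N / 2 ≤ ∫ x, U x ∂(gaussianN n))
    (hVi : ∫ x, V x ∂(gaussianN n) ≤ (β / (151732224 * k)) ^ (2 * k) * (β / 2) * N) :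
    gaussianN n {x | ¬ (β / (151732224 * k)) ^ (2 * k) * N ≤ W x} ≤ ENNReal.ofReal β := by
  have hk' : (0 : ℝ) < k := by exact_mod_cast hk
  set δ := (β / (151732224 * k)) ^ (2 * k) with hδ
  have hδ0 : 0 < δ := by positivity
  have hUs : (gaussianN n).real {x | U x ≤ 4 * δ * N} < β / 2 := by
    refine hU.measureReal_lt_of_nonneg hU0 (by omega) (by positivity) (by positivity) ?_
    refine lt_of_lt_of_le ?_ hUi
    have e : 4 * δ * N * (4741632 * ((2 * k : ℕ) : ℝ) / (β / 2)) ^ (2 * k) =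
        4 * N * (1 / 8) ^ (2 * k) := by
      rw [hδ, show 4 * (β / (151732224 * (k : ℝ))) ^ (2 * k) * N *
        (4741632 * ((2 * k : ℕ) : ℝ) / (β / 2)) ^ (2 * k) = 4 * N *
        ((β / (151732224 * (k : ℝ))) * (4741632 * ((2 * k : ℕ) : ℝ) / (β / 2))) ^ (2 * k) by
          rw [mul_pow]; ring]
      congr 2
      push_cast
      field_simp
      norm_num
    rw [e]
    have : ((1 : ℝ) / 8) ^ (2 * k) ≤ (1 / 8) ^ 2 :=
      pow_le_pow_of_le_one (by norm_num) (by norm_num) (by omega)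
    nlinarith
  have hVs : (gaussianN n).real {x | δ * N ≤ V x} ≤ β / 2 := by
    have := mul_meas_ge_le_integral_of_nonneg (ae_of_all _ hV0) hV (δ * N)
    have hpos : 0 < δ * N := by positivity
    refine le_of_mul_le_mul_left (this.trans (hVi.trans (le_of_eq ?_))) hpos
    ring
  have hsub : {x | ¬ δ * N ≤ W x} ⊆ {x | U x ≤ 4 * δ * N} ∪ {x | δ * N ≤ V x} := by
    intro x hx
    by_contra hcon
    simp only [Set.mem_union, Set.mem_ofPred_eq, not_or, not_le] at hcon hx
    have := hW x
    linarith
  rw [← ofReal_measureReal]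
  refine ENNReal.ofReal_le_ofReal ?_
  have h1 := measureReal_mono (μ := gaussianN n) hsub
  have h2 := measureReal_union_le (μ := gaussianN n) {x | U x ≤ 4 * δ * N} {x | δ * N ≤ V x}
  linarith

theorem NiceFamily.exists_expansion {n I d : ℕ} {g : (Fin I → ℝ) → MvPolynomial (Fin n) ℝ}
    (hg : NiceFamily n I d g) : ∃ c : (Fin n → ℕ) → (Fin I → ℝ) → ℝ,
      (∀ α, IsPolyOfDegreeLE d (c α)) ∧
      ∀ υ z, eval z (g υ) = ∑ α ∈ boxIndices n d, c α υ * hermiteMv α z := by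
  obtain ⟨E, hE⟩ := exists_hermite_expansion n d
  refine ⟨_, fun α => .sum _ fun a _ => ?_, fun υ => hE (g υ) (hg.1 υ)⟩
  simp only [mul_comm _ (E a α)]
  exact .const_mul _ (hg.2 _)

theorem two_norm_retention_of_expansion {n I d k : ℕ} (hk : 1 ≤ k)
    {c : (Fin n → ℕ) → (Fin I → ℝ) → ℝ} (hc : ∀ α, IsPolyOfDegreeLE d (c α))
    (Λ : Finset (Fin n → ℕ)) {S a b β : ℝ} (hab : a ^ 2 + b ^ 2 = 1) (hβ : 0 < β) (hβ1 : β < 1)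
    (hS : 151732224 * k / β ≤ S)
    (hatt : ∑ α ∈ Λ with k + 1 ≤ ∑ i, α i, S ^ (2 * ∑ i, α i) * ∫ υ, c α υ ^ 2 ∂(gaussianN I) ≤
      ∑ α ∈ Λ, ∫ υ, c α υ ^ 2 ∂(gaussianN I)) :
    gaussianN n {x | ¬ (β / (151732224 * k)) ^ (2 * k) *
        ∑ α ∈ Λ, ∫ υ, c α υ ^ 2 ∂(gaussianN I) ≤
      ∫ y, averageSq c Λ (a • x + b • y) ∂(gaussianN n)} ≤ ENNReal.ofReal β := by
  have hk' : (1 : ℝ) ≤ k := by exact_mod_cast hk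
  have hG : ∀ α, 0 ≤ ∫ υ, c α υ ^ 2 ∂(gaussianN I) := fun α => integral_nonneg fun _ => sq_nonneg _
  set N := ∑ α ∈ Λ, ∫ υ, c α υ ^ 2 ∂(gaussianN I) with hNdef
  have hN0 : 0 ≤ N := Finset.sum_nonneg fun α _ => hG α
  rcases hN0.eq_or_lt with hN | hN
  · have : ∀ x, 0 ≤ ∫ y, averageSq c Λ (a • x + b • y) ∂(gaussianN n) := fun x =>
      integral_nonneg fun _ => averageSq_nonneg c Λ _
    simp [← hN, not_lt.2 (this _)]
  set hi := {α ∈ Λ | k + 1 ≤ ∑ i, α i} with hhi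
  set lo := {α ∈ Λ | ¬ k + 1 ≤ ∑ i, α i} with hlo
  set r := β / (151732224 * k) with hr
  have hr0 : 0 < r := by positivity
  have hrβ : r ≤ β / 2 := div_le_div_of_nonneg_left hβ.le (by norm_num) (by linarith)
  have hrS : 1 ≤ r * S := by
    calc 1 = r * (151732224 * k / β) := by rw [hr]; field_simp
      _ ≤ r * S := by gcongr
  have hr1 : r ≤ 1 := by linarith
  have hS1 : 1 ≤ S := by nlinarith
  have hhiN : ∑ α ∈ hi, ∫ υ, c α υ ^ 2 ∂(gaussianN I) ≤ r ^ (2 * k) * (β / 2) * N := by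
    have h1 : S ^ (2 * (k + 1)) * ∑ α ∈ hi, ∫ υ, c α υ ^ 2 ∂(gaussianN I) ≤ N := by
      rw [Finset.mul_sum]
      refine (Finset.sum_le_sum fun α hα => ?_).trans hatt
      refine mul_le_mul_of_nonneg_right (pow_le_pow_right₀ hS1 ?_) (hG α)
      have := (Finset.mem_filter.1 hα).2
      omega
    have h2 : r ^ (2 * k) * r ^ 2 * N ≤ r ^ (2 * k) * (β / 2) * N := by
      gcongr
      nlinarith
    refine le_trans ?_ h2
    have h3 : 1 ≤ (r * S) ^ (2 * (k + 1)) := one_le_pow₀ hrS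
    have h4 : 0 ≤ ∑ α ∈ hi, ∫ υ, c α υ ^ 2 ∂(gaussianN I) := Finset.sum_nonneg fun α _ => hG α
    calc ∑ α ∈ hi, ∫ υ, c α υ ^ 2 ∂(gaussianN I)
        ≤ (r * S) ^ (2 * (k + 1)) * ∑ α ∈ hi, ∫ υ, c α υ ^ 2 ∂(gaussianN I) :=
          le_mul_of_one_le_left h4 h3
      _ = r ^ (2 * (k + 1)) * (S ^ (2 * (k + 1)) * ∑ α ∈ hi, ∫ υ, c α υ ^ 2 ∂(gaussianN I)) := by
          rw [mul_pow, mul_assoc]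
      _ ≤ r ^ (2 * (k + 1)) * N := by gcongr
      _ = r ^ (2 * k) * r ^ 2 * N := by ring
  have hlohi : ∑ α ∈ hi, ∫ υ, c α υ ^ 2 ∂(gaussianN I) +
      ∑ α ∈ lo, ∫ υ, c α υ ^ 2 ∂(gaussianN I) = N :=
    Finset.sum_filter_add_sum_filter_not Λ _ _
  have hhalf : r ^ (2 * k) * (β / 2) * N ≤ N / 2 := by
    have := pow_le_one₀ (n := 2 * k) hr0.le hr1
    have : r ^ (2 * k) * (β / 2) ≤ 1 * (1 / 2) := by gcongr
    nlinarith
  have hplo : IsPolyOfDegreeLE (2 * k) (averageSq c lo) := isPolyOfDegreeLE_averageSq hc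
    fun α hα => by
      have := (Finset.mem_filter.1 hα).2
      omega
  obtain ⟨e₁, hphi⟩ := exists_isPolyOfDegreeLE_averageSq hc hi
  obtain ⟨e₂, hpall⟩ := exists_isPolyOfDegreeLE_averageSq hc Λ
  refine gaussianN_not_le_of_split hk (hplo.smoothing a b)
    (fun x => integral_nonneg fun _ => averageSq_nonneg c _ _) (hphi.smoothing a b).integrable
    (fun x => integral_nonneg fun _ => averageSq_nonneg c _ _) (fun x => ?_) hN hβ ?_ ?_
  · have h1 := hplo.integrable_affine a b x
    have h2 := hphi.integrable_affine a b x
    have h3 := hpall.integrable_affine a b x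
    have := integral_mono h1 ((h3.const_mul 2).add (h2.const_mul 2))
      fun y => averageSq_filter_le hc Λ k (a • x + b • y)
    simp only [Pi.add_apply] at this
    rw [integral_add (h3.const_mul 2) (h2.const_mul 2), integral_const_mul, integral_const_mul]
      at this
    linarith
  · rw [hplo.integral_smoothing hab, integral_averageSq hc]
    linarith
  · rw [hphi.integral_smoothing hab, integral_averageSq hc]
    exact hhiN

theorem one_le_log_three_div {β : ℝ} (hβ : 0 < β) (hβ1 : β < 1) : 1 ≤ Real.log (3 / β) := by
  rw [Real.le_log_iff_exp_le (by positivity)]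
  refine Real.exp_one_lt_three.le.trans ?_
  rw [le_div_iff₀ hβ]
  linarith

end

/-- Two-norm retention for an attenuated-on-average nice distribution: there is a
universal constant `C` such that if a nice distribution `(g_υ)` of polynomials
(of degree at most `d`) is `(k,S,1)`-attenuated on average for some `k ≥ 1`, and
`S ≥ C·k·log(3/β')/β'`, then for `0 ≤ λ ≤ 1` and `x ∼ N(0,1)^n`, except with
probability at most `β'`, we have
`E_υ[‖(g_υ)_{λ|x}‖₂²] ≥ (β'/(C·k))^{2k}·E_υ[‖g_υ‖₂²]`.  Here `HyperVar_S[g^{>k}]`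
is encoded as `hyperVarGE S (k+1) g`. -/
theorem two_norm_retention_attenuated :
    ∃ C : ℝ, 1 ≤ C ∧
      ∀ (n I d k : ℕ), 1 ≤ k →
      ∀ g : (Fin I → ℝ) → MvPolynomial (Fin n) ℝ, NiceFamily n I d g →
      ∀ S lam β' : ℝ, 0 ≤ lam → lam ≤ 1 → 0 < β' → β' < 1 →
      (∫ υ, hyperVarGE S (k + 1) (g υ) ∂(gaussianN I)) ≤
          (∫ υ, norm2sq (g υ) ∂(gaussianN I)) →
      C * k * Real.log (3 / β') / β' ≤ S →
      gaussianN n {x | ¬ ((β' / (C * k)) ^ (2 * k) * (∫ υ, norm2sq (g υ) ∂(gaussianN I)) ≤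
          ∫ υ, norm2sq (zoom (g υ) lam x) ∂(gaussianN I))} ≤ ENNReal.ofReal β' := by
  refine ⟨151732224, by norm_num, ?_⟩
  intro n I d k hk g hg S lam β hlam0 hlam1 hβ hβ1 hatt hS
  obtain ⟨c, hc, hexp⟩ := hg.exists_expansion
  have hc2 : ∀ α, Integrable (fun υ => c α υ ^ 2) (gaussianN I) := fun α => ((hc α).pow 2).integrable
  have hzoom : ∀ x, ∫ υ, norm2sq (zoom (g υ) lam x) ∂(gaussianN I) =
      ∫ y, averageSq c (boxIndices n d) (Real.sqrt (1 - lam) • x + Real.sqrt lam • y)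
        ∂(gaussianN n) := by
    intro x
    simp only [norm2sq, eval_zoom, hexp]
    exact integral_integral_sq hc _ _ _ x
  have hnorm : ∫ υ, norm2sq (g υ) ∂(gaussianN I) =
      ∑ α ∈ boxIndices n d, ∫ υ, c α υ ^ 2 ∂(gaussianN I) := by
    have := integral_integral_sq hc (boxIndices n d) 0 1 0
    simp only [zero_smul, one_smul, zero_add] at this
    simp only [norm2sq, hexp]
    rw [this, integral_averageSq hc]
  simp only [fun υ => hyperVarGE_eq_of_expansion (hexp υ) S (k + 1)] at hatt
  rw [integral_finsetSum _ fun α _ => (hc2 α).const_mul _] at hatt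
  simp only [integral_const_mul] at hatt
  rw [hnorm] at hatt ⊢
  simp only [hzoom]
  refine two_norm_retention_of_expansion hk hc _ ?_ hβ hβ1 (le_trans ?_ hS) hatt
  · rw [Real.sq_sqrt (by linarith), Real.sq_sqrt hlam0]
    ring
  · exact div_le_div_of_nonneg_right
      (le_mul_of_one_le_right (by positivity) (one_le_log_three_div hβ hβ1)) hβ.le
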